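/- arXiv:1303.5509 — 3 statements merged into one kernel-verified Lean document; each statement's English description precedes it below -/
import Mathlib

section
/- Let q be a prime power, let π be an order-q-subplane of PG(2,q³) tangent to ℓ∞ at the point T, with tangent splash S_T, and let P be a point of π not on ℓ∞. Then the set t_P = { ℓ̄ ∩ ℓ∞ : ℓ a line of π through P, where ℓ̄ is the line of PG(2,q³) extending ℓ } is an order-q-subline of ℓ∞ that contains T and is contained in S_T. -/
namespace TangentSplashPaper

open Projectivization

/-- The point set of the projective plane `PG(2,K)`. -/
abbrev PGPoint (K : Type*) [Field K] := Projectivization K (Fin 3 → K)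

/-- `ℓ` is a line of `PG(2,K)`: the set of points lying in a fixed
2-dimensional linear subspace. -/
def IsLine {K : Type*} [Field K] (ℓ : Set (PGPoint K)) : Prop :=
  ∃ W : Submodule K (Fin 3 → K), Module.finrank K W = 2 ∧
    ℓ = {P : PGPoint K | P.submodule ≤ W}

/-- The distinguished line `ℓ∞` of `PG(2,K)`: points whose last homogeneous
coordinate vanishes. -/
def linf (K : Type*) [Field K] : Set (PGPoint K) := {P : PGPoint K | P.rep 2 = 0}

/-- The homography of `PG(2,K)` induced by a linear automorphism of `K³`;
as maps of point sets, these are exactly the elements of `PGL(3,K)`. -/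
def hmap {K : Type*} [Field K] (f : (Fin 3 → K) ≃ₗ[K] (Fin 3 → K)) :
    PGPoint K → PGPoint K :=
  Projectivization.map f.toLinearMap f.injective

/-- The base subplane `PG(2,F)`: points admitting homogeneous coordinates in
the subfield `F`. -/
def basePlane (F K : Type*) [Field F] [Field K] [Algebra F K] : Set (PGPoint K) :=
  {P : PGPoint K | ∃ v : Fin 3 → K, ∃ hv : v ≠ 0, P = Projectivization.mk K v hv ∧
    ∀ i, v i ∈ (algebraMap F K).range}

/-- An order-`q`-subplane of `PG(2,K)` (`q = |F|`): an image of `PG(2,F)`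
under a homography. -/
def IsSubplane (F : Type*) {K : Type*} [Field F] [Field K] [Algebra F K]
    (S : Set (PGPoint K)) : Prop :=
  ∃ f : (Fin 3 → K) ≃ₗ[K] (Fin 3 → K), S = hmap f '' basePlane F K

/-- An order-`q`-subline of `PG(2,K)`: the intersection of an order-`q`-subplane
with a line of `PG(2,K)` meeting it in `q+1` points. -/
def IsSubline (F : Type*) {K : Type*} [Field F] [Field K] [Algebra F K] (q : ℕ)
    (b : Set (PGPoint K)) : Prop :=
  ∃ S ℓ : Set (PGPoint K), IsSubplane F S ∧ IsLine ℓ ∧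
    (S ∩ ℓ).ncard = q + 1 ∧ b = S ∩ ℓ

/-- The splash of a subplane `π` on `ℓ∞`: all points of `ℓ∞` lying on a line
of `PG(2,K)` spanned by two points of `π`. -/
def splash {K : Type*} [Field K] (π : Set (PGPoint K)) : Set (PGPoint K) :=
  {X : PGPoint K | X ∈ linf K ∧ ∃ P Q : PGPoint K, P ∈ π ∧ Q ∈ π ∧ P ≠ Q ∧
    ∃ ℓ : Set (PGPoint K), IsLine ℓ ∧ P ∈ ℓ ∧ Q ∈ ℓ ∧ X ∈ ℓ}

/-- `S` is a tangent splash of `ℓ∞` with centre `T`: `S` is the splash of some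
order-`q`-subplane meeting `ℓ∞` exactly in the point `T`. -/
def IsTangentSplash (F : Type*) {K : Type*} [Field F] [Field K] [Algebra F K]
    (S : Set (PGPoint K)) (T : PGPoint K) : Prop :=
  ∃ π : Set (PGPoint K), IsSubplane F π ∧ π ∩ linf K = {T} ∧ S = splash π

/-- The set `t_P`: points of `ℓ∞` lying on the extension of a line of the
subplane `π` through the point `P` (lines of `π` are the lines of `PG(2,K)`
meeting `π` in `q+1` points). -/
def pencilTrace {K : Type*} [Field K] (q : ℕ) (π : Set (PGPoint K))
    (P : PGPoint K) : Set (PGPoint K) :=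
  {X : PGPoint K | X ∈ linf K ∧ ∃ ℓ : Set (PGPoint K), IsLine ℓ ∧ P ∈ ℓ ∧
    (π ∩ ℓ).ncard = q + 1 ∧ X ∈ ℓ}

/-- Coordinatewise embedding of `F³` in `K³`. -/
def emb (F K : Type*) [Field F] [Field K] [Algebra F K] (x : Fin 3 → F) : Fin 3 → K :=
  fun i => algebraMap F K (x i)

lemma emb_inj {F K : Type*} [Field F] [Field K] [Algebra F K] {x y : Fin 3 → F}
    (h : emb F K x = emb F K y) : x = y := by
  funext i
  exact (algebraMap F K).injective (congrFun h i)

lemma emb_zero {F K : Type*} [Field F] [Field K] [Algebra F K] :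
    emb F K (0 : Fin 3 → F) = 0 := by
  funext i; simp [emb]

lemma femb_ne {F K : Type*} [Field F] [Field K] [Algebra F K]
    (f : (Fin 3 → K) ≃ₗ[K] (Fin 3 → K)) {x : Fin 3 → F} (hx : x ≠ 0) :
    f (emb F K x) ≠ 0 := by
  intro h
  apply hx
  apply emb_inj (K := K)
  rw [emb_zero]
  simpa using h

lemma mem_image_iff {F K : Type*} [Field F] [Field K] [Algebra F K]
    (f : (Fin 3 → K) ≃ₗ[K] (Fin 3 → K)) (X : PGPoint K) :
    X ∈ hmap f '' basePlane F K ↔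
      ∃ x : Fin 3 → F, ∃ hx : x ≠ 0, X = Projectivization.mk K (f (emb F K x)) (femb_ne f hx) := by
  constructor
  · rintro ⟨Y, ⟨v, hv, rfl, h⟩, rfl⟩
    choose x hx using h
    have hxv : emb F K x = v := funext hx
    subst hxv
    refine ⟨x, fun h => hv (by rw [h, emb_zero]), ?_⟩
    simp [hmap, Projectivization.map_mk]
  · rintro ⟨x, hx, rfl⟩
    have h0 : emb F K x ≠ 0 := fun h => femb_ne f hx (by simp [h])
    refine ⟨Projectivization.mk K (emb F K x) h0, ⟨_, h0, rfl, fun i => ⟨x i, rfl⟩⟩, ?_⟩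
    simp [hmap, Projectivization.map_mk]

lemma mk_mem_linf {K : Type*} [Field K] (v : Fin 3 → K) (hv : v ≠ 0) :
    Projectivization.mk K v hv ∈ linf K ↔ v 2 = 0 := by
  obtain ⟨a, ha⟩ := Projectivization.exists_smul_eq_mk_rep K v hv
  simp only [linf, Set.mem_ofPred_eq, ← ha]
  simp [Units.smul_def]

lemma mk_mem_line {K : Type*} [Field K] (W : Submodule K (Fin 3 → K)) (v : Fin 3 → K)
    (hv : v ≠ 0) : Projectivization.mk K v hv ∈ {P : PGPoint K | P.submodule ≤ W} ↔ v ∈ W := by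
  simp [Projectivization.submodule_mk]

lemma emb_mulVec {F K : Type*} [Field F] [Field K] [Algebra F K]
    (M : Matrix (Fin 3) (Fin 3) F) (x : Fin 3 → F) :
    (M.map (algebraMap F K)).mulVec (emb F K x) = emb F K (M.mulVec x) := by
  funext i
  exact ((algebraMap F K).map_mulVec M x i).symm

lemma rebase {F K : Type*} [Field F] [Field K] [Algebra F K]
    (f : (Fin 3 → K) ≃ₗ[K] (Fin 3 → K)) (P Q : PGPoint K) (hP : P ∈ hmap f '' basePlane F K)
    (hQ : Q ∈ hmap f '' basePlane F K) (hPQ : P ≠ Q) :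
    ∃ g : (Fin 3 → K) ≃ₗ[K] (Fin 3 → K), hmap g '' basePlane F K = hmap f '' basePlane F K ∧
      (∃ h, P = Projectivization.mk K (g (emb F K ![1, 0, 0])) h) ∧
      (∃ h, Q = Projectivization.mk K (g (emb F K ![0, 1, 0])) h) := by
  rw [mem_image_iff] at hP hQ
  obtain ⟨u, hu, rfl⟩ := hP
  obtain ⟨v, hv, rfl⟩ := hQ
  have hli : LinearIndependent F ![u, v] := by
    rw [LinearIndependent.pair_iff' hu]
    rintro a rfl
    apply hPQ
    symm
    rw [Projectivization.mk_eq_mk_iff']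
    refine ⟨algebraMap F K a, ?_⟩
    rw [← map_smul]
    congr 1
    funext i
    simp [emb]
  obtain ⟨w, hw⟩ := exists_linearIndependent_snoc_of_lt_finrank hli (by simp)
  let B : Matrix (Fin 3) (Fin 3) F := Matrix.of (Fin.snoc ![u, v] w)
  have hB : IsUnit B := Matrix.linearIndependent_rows_iff_isUnit.1 hw
  let M := B.transpose
  have hM : IsUnit M := (Matrix.isUnit_transpose B).2 hB
  have hd : IsUnit M.det := (Matrix.isUnit_iff_isUnit_det M).1 hM
  have h1 : (M.map (algebraMap F K)) * (M⁻¹.map (algebraMap F K)) = 1 := by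
    rw [← Matrix.map_mul, Matrix.mul_nonsing_inv _ hd]; simp
  have h2 : (M⁻¹.map (algebraMap F K)) * (M.map (algebraMap F K)) = 1 := by
    rw [← Matrix.map_mul, Matrix.nonsing_inv_mul _ hd]; simp
  let e : (Fin 3 → K) ≃ₗ[K] (Fin 3 → K) := Matrix.toLin'OfInv h2 h1
  have he : ∀ x, e (emb F K x) = emb F K (M.mulVec x) := by
    intro x
    rw [← emb_mulVec]
    rfl
  have hMu : M.mulVec ![1, 0, 0] = u := by
    funext i
    simp [Matrix.mulVec, dotProduct, Fin.sum_univ_three, M, B]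
  have hMv : M.mulVec ![0, 1, 0] = v := by
    funext i
    simp [Matrix.mulVec, dotProduct, Fin.sum_univ_three, M, B]
  refine ⟨e.trans f, ?_, ?_, ?_⟩
  · ext X
    rw [mem_image_iff, mem_image_iff]
    constructor
    · rintro ⟨x, hx, rfl⟩
      refine ⟨M.mulVec x, ?_, ?_⟩
      · intro h
        apply hx
        have := congrArg (M⁻¹.mulVec) h
        simpa [Matrix.mulVec_mulVec, Matrix.nonsing_inv_mul _ hd] using this
      · simp only [LinearEquiv.trans_apply, he]
    · rintro ⟨x, hx, rfl⟩
      refine ⟨M⁻¹.mulVec x, ?_, ?_⟩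
      · intro h
        apply hx
        have := congrArg (M.mulVec) h
        simpa [Matrix.mulVec_mulVec, Matrix.mul_nonsing_inv _ hd] using this
      · simp only [LinearEquiv.trans_apply, he, Matrix.mulVec_mulVec, Matrix.mul_nonsing_inv _ hd,
          Matrix.one_mulVec]
  · have : (e.trans f) (emb F K ![1, 0, 0]) = f (emb F K u) := by
      simp [he, hMu]
    simp only [this]
    exact ⟨femb_ne f hu, trivial⟩
  · have : (e.trans f) (emb F K ![0, 1, 0]) = f (emb F K v) := by
      simp [he, hMv]
    simp only [this]
    exact ⟨femb_ne f hv, trivial⟩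

lemma emb_split {F K : Type*} [Field F] [Field K] [Algebra F K]
    (g : (Fin 3 → K) ≃ₗ[K] (Fin 3 → K)) (x : Fin 3 → F) :
    g (emb F K x) = algebraMap F K (x 0) • g (emb F K ![1, 0, 0]) +
      algebraMap F K (x 1) • g (emb F K ![0, 1, 0]) +
      algebraMap F K (x 2) • g (emb F K ![0, 0, 1]) := by
  rw [← map_smul, ← map_smul, ← map_smul, ← map_add, ← map_add]
  congr 1
  funext i
  fin_cases i <;> simp [emb, Algebra.smul_def]

lemma count_line {F K : Type*} [Field F] [Field K] [Fintype F] [Algebra F K]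
    {S ℓ : Set (PGPoint K)} (hS : IsSubplane F S) (hl : IsLine ℓ) {P Q : PGPoint K}
    (hP : P ∈ S) (hQ : Q ∈ S) (hPQ : P ≠ Q) (hPl : P ∈ ℓ) (hQl : Q ∈ ℓ) :
    (S ∩ ℓ).ncard = Fintype.card F + 1 := by
  obtain ⟨f, rfl⟩ := hS
  obtain ⟨g, hg, ⟨hP0, rfl⟩, ⟨hQ0, rfl⟩⟩ := rebase f P Q hP hQ hPQ
  rw [← hg]
  obtain ⟨W, hW, rfl⟩ := hl
  rw [mk_mem_line] at hPl hQl
  have hR : g (emb F K ![0, 0, 1]) ∉ W := by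
    intro hR
    have : W = ⊤ := by
      rw [eq_top_iff]
      intro y _
      have : y = g ((g.symm y)) := by simp
      have h2 : y = (g.symm y 0) • g (emb F K ![1, 0, 0]) +
          (g.symm y 1) • g (emb F K ![0, 1, 0]) + (g.symm y 2) • g (emb F K ![0, 0, 1]) := by
        rw [← map_smul, ← map_smul, ← map_smul, ← map_add, ← map_add]
        conv_lhs => rw [this]
        congr 1
        funext i
        fin_cases i <;> simp [emb]
      rw [h2]
      exact W.add_mem (W.add_mem (W.smul_mem _ hPl) (W.smul_mem _ hQl)) (W.smul_mem _ hR)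
    rw [this] at hW
    simp at hW
  have hmem : ∀ x : Fin 3 → F, g (emb F K x) ∈ W ↔ x 2 = 0 := by
    intro x
    rw [emb_split, W.add_mem_iff_right (W.add_mem (W.smul_mem _ hPl) (W.smul_mem _ hQl))]
    constructor
    · intro h
      by_contra hx
      apply hR
      rwa [W.smul_mem_iff] at h
      simpa using hx
    · intro h
      simp [h]
  let φ : (Fin 2 → F) →ₛₗ[algebraMap F K] (Fin 3 → K) :=
    { toFun := fun x => g (emb F K ![x 0, x 1, 0])
      map_add' := by
        intro x y
        rw [← map_add]
        congr 1
        funext i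
        fin_cases i <;> simp [emb]
      map_smul' := by
        intro a x
        rw [← map_smul]
        congr 1
        funext i
        fin_cases i <;> simp [emb] }
  have hφ : Function.Injective φ := by
    intro x y h
    have h2 := emb_inj (g.injective h)
    funext i
    fin_cases i
    · simpa using congrFun h2 0
    · simpa using congrFun h2 1
  have hrange : hmap g '' basePlane F K ∩ {P : PGPoint K | P.submodule ≤ W} =
      Set.range (Projectivization.map φ hφ) := by
    ext X
    rw [Set.mem_inter_iff, mem_image_iff]
    constructor
    · rintro ⟨⟨x, hx, rfl⟩, h⟩
      rw [mk_mem_line, hmem] at h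
      have hx' : ![x 0, x 1] ≠ 0 := by
        intro h'
        apply hx
        funext i
        fin_cases i
        · simpa using congrFun h' 0
        · simpa using congrFun h' 1
        · simpa using h
      have hxx : ![x 0, x 1, 0] = x := by
        funext i
        fin_cases i <;> simp [h]
      refine ⟨Projectivization.mk F _ hx', ?_⟩
      rw [Projectivization.map_mk]
      congr 1
      simp [φ, hxx]
    · rintro ⟨Y, rfl⟩
      induction Y with
      | h y hy =>
        rw [Projectivization.map_mk]
        refine ⟨⟨![y 0, y 1, 0], ?_, rfl⟩, ?_⟩
        · intro h'
          apply hy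
          funext i
          fin_cases i
          · simpa using congrFun h' 0
          · simpa using congrFun h' 1
        · rw [mk_mem_line]
          exact (hmem _).2 rfl
  have hinj : Function.Injective (Projectivization.map φ hφ) := by
    intro X Y h
    induction X with
    | h x hx =>
    induction Y with
    | h y hy =>
      rw [Projectivization.map_mk, Projectivization.map_mk, Projectivization.mk_eq_mk_iff'] at h
      obtain ⟨a, ha⟩ := h
      rw [Projectivization.mk_eq_mk_iff']
      have ha' : a • emb F K ![y 0, y 1, 0] = emb F K ![x 0, x 1, 0] := by
        apply g.injective
        rw [map_smul]
        exact ha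
      have h0 : a * algebraMap F K (y 0) = algebraMap F K (x 0) := by
        simpa [emb] using congrFun ha' 0
      have h1 : a * algebraMap F K (y 1) = algebraMap F K (x 1) := by
        simpa [emb] using congrFun ha' 1
      have hb : ∃ b : F, algebraMap F K b = a := by
        by_cases hy0 : y 0 = 0
        · have hy1 : y 1 ≠ 0 := by
            intro hy1
            apply hy
            funext i
            fin_cases i
            · exact hy0
            · exact hy1
          refine ⟨x 1 / y 1, ?_⟩
          rw [map_div₀, ← h1]
          have : algebraMap F K (y 1) ≠ 0 := by simpa using hy1
          field_simp
        · refine ⟨x 0 / y 0, ?_⟩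
          rw [map_div₀, ← h0]
          have : algebraMap F K (y 0) ≠ 0 := by simpa using hy0
          field_simp
      obtain ⟨b, rfl⟩ := hb
      refine ⟨b, ?_⟩
      funext i
      apply (algebraMap F K).injective
      fin_cases i
      · simpa using h0
      · simpa using h1
  rw [hrange, ← Set.image_univ, Set.ncard_image_of_injective _ hinj, Set.ncard_univ,
    Projectivization.card_of_finrank_two F (Fin 2 → F) (by simp), Nat.card_eq_fintype_card]

lemma line_linf {K : Type*} [Field K] (W : Submodule K (Fin 3 → K))
    (hW : Module.finrank K W = 2) {p x z : Fin 3 → K} (hp : p ∈ W) (hp2 : p 2 ≠ 0)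
    (hx : x ∈ W) (hx2 : x 2 = 0) (hx0 : x ≠ 0) (hz : z ∈ W) (hz2 : z 2 = 0) :
    ∃ c : K, c • x = z := by
  by_contra hcon
  push Not at hcon
  have hli : LinearIndependent K ![x, z] := (LinearIndependent.pair_iff' hx0).2 hcon
  have hle : Submodule.span K (Set.range ![x, z]) ≤ W := by
    rw [Submodule.span_le]
    rintro _ ⟨i, rfl⟩
    fin_cases i
    · exact hx
    · exact hz
  have heq := Submodule.eq_of_le_of_finrank_eq hle (by rw [finrank_span_eq_card hli, hW]; simp)
  rw [← heq] at hp
  simp only [Matrix.range_cons, Matrix.range_empty, Set.union_empty, Set.singleton_union,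
    Submodule.mem_span_pair] at hp
  obtain ⟨a, b, rfl⟩ := hp
  apply hp2
  simp [hx2, hz2]

lemma isLine_linf (K : Type*) [Field K] : IsLine (linf K) := by
  have hli : LinearIndependent K ![(![1, 0, 0] : Fin 3 → K), ![0, 1, 0]] := by
    rw [LinearIndependent.pair_iff]
    intro s t h
    exact ⟨by simpa using congrFun h 0, by simpa using congrFun h 1⟩
  refine ⟨Submodule.span K (Set.range ![(![1, 0, 0] : Fin 3 → K), ![0, 1, 0]]), ?_, ?_⟩
  · rw [finrank_span_eq_card hli]; simp
  · ext X
    induction X using Projectivization.ind with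
    | h v hv =>
      rw [mk_mem_linf, mk_mem_line]
      simp only [Matrix.range_cons, Matrix.range_empty, Set.union_empty, Set.singleton_union,
        Submodule.mem_span_pair]
      constructor
      · intro h
        refine ⟨v 0, v 1, ?_⟩
        funext i
        fin_cases i <;> simp [h]
      · rintro ⟨a, b, rfl⟩
        simp

/-- The shear `x ↦ x - c x₂ e₀`. -/
def shear {K : Type*} [Field K] (c : K) : (Fin 3 → K) ≃ₗ[K] (Fin 3 → K) where
  toFun x := ![x 0 - c * x 2, x 1, x 2]
  invFun x := ![x 0 + c * x 2, x 1, x 2]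
  map_add' x y := by
    funext i
    fin_cases i <;> simp
    ring
  map_smul' a x := by
    funext i
    fin_cases i <;> simp
    ring
  left_inv x := by
    funext i
    fin_cases i <;> simp
  right_inv x := by
    funext i
    fin_cases i <;> simp

/-- For an order-`q`-subplane `π` tangent to `ℓ∞` at `T` and an affine
point `P` of `π`, the set `t_P` of points of `ℓ∞` on extended lines of `π` through `P`
is an order-`q`-subline of `ℓ∞` containing `T` and contained in the tangent splash of `π`. -/
theorem statement0 (q : ℕ) (F K : Type) [Field F] [Field K] [Fintype F] [Fintype K]
    [Algebra F K] (hF : Fintype.card F = q) (hK : Fintype.card K = q ^ 3)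
    (π : Set (PGPoint K)) (T : PGPoint K)
    (hπ : IsSubplane F π) (htan : π ∩ linf K = {T})
    (P : PGPoint K) (hP : P ∈ π) (hPaff : P ∉ linf K) :
    IsSubline F q (pencilTrace q π P) ∧ pencilTrace q π P ⊆ linf K ∧
      T ∈ pencilTrace q π P ∧ pencilTrace q π P ⊆ splash π := by
  subst hF
  have hTm : T ∈ π ∩ linf K := by rw [htan]; rfl
  have hPT : P ≠ T := fun h => hPaff (h ▸ hTm.2)
  have hsub := hπ
  obtain ⟨f₀, hf₀⟩ := hπ
  obtain ⟨f, hf, ⟨hP0, hPe⟩, ⟨hT0, hTe⟩⟩ := rebase (F := F) f₀ P T (hf₀ ▸ hP) (hf₀ ▸ hTm.1) hPT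
  rw [← hf₀] at hf
  have ha0 : f (emb F K ![1, 0, 0]) 2 ≠ 0 := by
    rw [hPe, mk_mem_linf] at hPaff
    exact hPaff
  have ha1 : f (emb F K ![0, 1, 0]) 2 = 0 := by
    have := hTm.2
    rwa [hTe, mk_mem_linf] at this
  set p := f (emb F K ![1, 0, 0]) with hp
  set c : K := f (emb F K ![0, 0, 1]) 2 / p 2 with hc
  let g : (Fin 3 → K) ≃ₗ[K] (Fin 3 → K) := (shear c).trans f
  have hg : ∀ x : Fin 3 → F, g (emb F K x) = f (emb F K x) - (c * algebraMap F K (x 2)) • p := by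
    intro x
    rw [hp, ← map_smul, ← map_sub]
    change f _ = f _
    congr 1
    funext i
    fin_cases i <;> simp [shear, emb]
  have hg2 : ∀ x : Fin 3 → F, g (emb F K x) 2 = algebraMap F K (x 0) * p 2 := by
    intro x
    rw [hg, emb_split]
    simp only [Pi.add_apply, Pi.sub_apply, Pi.smul_apply, smul_eq_mul, ha1, ← hp, hc]
    field_simp
    ring
  -- forward direction
  have hfw : ∀ ℓ : Set (PGPoint K), IsLine ℓ → P ∈ ℓ → (π ∩ ℓ).ncard = Fintype.card F + 1 →
      ∃ Q, Q ∈ π ∧ Q ∈ ℓ ∧ P ≠ Q := by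
    intro ℓ _ _ hn
    obtain ⟨Q, hQ, hQP⟩ := Set.exists_ne_of_one_lt_ncard
      (show 1 < (π ∩ ℓ).ncard by rw [hn]; have := Fintype.card_pos (α := F); omega) P
    exact ⟨Q, hQ.1, hQ.2, hQP.symm⟩
  have hS : IsSubplane F (hmap g '' basePlane F K) := ⟨g, rfl⟩
  have hgT : g (emb F K ![0, 1, 0]) = f (emb F K ![0, 1, 0]) := by
    rw [hg]; simp
  have hTS : T ∈ hmap g '' basePlane F K := by
    rw [mem_image_iff]
    refine ⟨![0, 1, 0], fun h => by simpa using congrFun h 1, ?_⟩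
    rw [hTe]
    congr 1
    exact hgT.symm
  have key : pencilTrace (Fintype.card F) π P = hmap g '' basePlane F K ∩ linf K := by
    ext X
    constructor
    · rintro ⟨hXl, ℓ, hl, hPl, hn, hX⟩
      refine ⟨?_, hXl⟩
      obtain ⟨Q, hQ, hQl, hPQ⟩ := hfw ℓ hl hPl hn
      obtain ⟨W, hW, rfl⟩ := hl
      rw [← hf, mem_image_iff] at hQ
      obtain ⟨y, hy, rfl⟩ := hQ
      rw [hPe, mk_mem_line] at hPl
      rw [mk_mem_line] at hQl
      have hy' : (![0, y 1, y 2] : Fin 3 → F) ≠ 0 := by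
        intro h
        have h1 : y 1 = 0 := by simpa using congrFun h 1
        have h2 : y 2 = 0 := by simpa using congrFun h 2
        apply hPQ
        rw [hPe]
        symm
        rw [Projectivization.mk_eq_mk_iff']
        refine ⟨algebraMap F K (y 0), ?_⟩
        rw [emb_split f y, h1, h2]
        simp [hp]
      rw [mem_image_iff]
      refine ⟨_, hy', ?_⟩
      have hzW : g (emb F K ![0, y 1, y 2]) ∈ W := by
        have : g (emb F K ![0, y 1, y 2]) = f (emb F K y) -
            (algebraMap F K (y 0) + c * algebraMap F K (y 2)) • p := by
          rw [hg, emb_split f y, emb_split f ![0, y 1, y 2], ← hp]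
          simp
          module
        rw [this]
        exact W.sub_mem hQl (W.smul_mem _ hPl)
      have hz2 : g (emb F K ![0, y 1, y 2]) 2 = 0 := by rw [hg2]; simp
      induction X using Projectivization.ind with
      | h v hv =>
        rw [mk_mem_line] at hX
        rw [mk_mem_linf] at hXl
        rw [Projectivization.mk_eq_mk_iff']
        exact line_linf W hW hPl ha0 hzW hz2 (femb_ne g hy') hX hXl
    · rintro ⟨hXS, hXl⟩
      refine ⟨hXl, ?_⟩
      rw [mem_image_iff] at hXS
      obtain ⟨x, hx, rfl⟩ := hXS
      rw [mk_mem_linf, hg2] at hXl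
      have hx0 : x 0 = 0 := by simpa [ha0] using hXl
      have hz2 : g (emb F K x) 2 = 0 := by rw [hg2]; simp [hx0]
      have hli : LinearIndependent K ![p, g (emb F K x)] := by
        rw [LinearIndependent.pair_iff' hP0]
        intro a h
        have h2 := congrFun h 2
        rw [hz2] at h2
        have : a = 0 := by simpa [ha0] using h2
        rw [this, zero_smul] at h
        exact femb_ne g hx h.symm
      have hpW : p ∈ Submodule.span K (Set.range ![p, g (emb F K x)]) :=
        Submodule.subset_span ⟨0, rfl⟩
      have hzW : g (emb F K x) ∈ Submodule.span K (Set.range ![p, g (emb F K x)]) :=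
        Submodule.subset_span ⟨1, rfl⟩
      have hline : IsLine {P : PGPoint K | P.submodule ≤
          Submodule.span K (Set.range ![p, g (emb F K x)])} :=
        ⟨_, by rw [finrank_span_eq_card hli]; simp, rfl⟩
      refine ⟨_, hline, ?_, ?_, ?_⟩
      · rw [hPe, mk_mem_line]
        exact hpW
      · refine count_line hsub hline (P := P)
          (Q := Projectivization.mk K (f (emb F K x)) (femb_ne f hx)) hP ?_ ?_ ?_ ?_
        · rw [← hf, mem_image_iff]
          exact ⟨x, hx, rfl⟩
        · rw [hPe]
          intro h
          symm at h
          rw [Projectivization.mk_eq_mk_iff'] at h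
          obtain ⟨a, ha⟩ := h
          rw [LinearIndependent.pair_iff' hP0] at hli
          apply hli (a - c * algebraMap F K (x 2))
          rw [hg, ← ha, sub_smul]
        · rw [hPe, mk_mem_line]
          exact hpW
        · rw [mk_mem_line]
          have : f (emb F K x) = g (emb F K x) + (c * algebraMap F K (x 2)) • p := by
            rw [hg]; simp
          rw [this]
          exact Submodule.add_mem _ hzW (Submodule.smul_mem _ _ hpW)
      · rw [mk_mem_line]
        exact hzW
  refine ⟨⟨_, linf K, hS, isLine_linf K, ?_, key⟩, fun X hX => hX.1, ?_, ?_⟩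
  · have hR0 : (![0, 0, 1] : Fin 3 → F) ≠ 0 := fun h => by simpa using congrFun h 2
    refine count_line hS (isLine_linf K) (P := T)
      (Q := Projectivization.mk K (g (emb F K ![0, 0, 1])) (femb_ne g hR0)) hTS ?_ ?_ hTm.2 ?_
    · rw [mem_image_iff]
      exact ⟨_, hR0, rfl⟩
    · rw [hTe]
      intro h
      rw [Projectivization.mk_eq_mk_iff'] at h
      obtain ⟨a, ha⟩ := h
      rw [← hgT, ← map_smul] at ha
      simpa [emb] using congrFun (g.injective ha) 1
    · rw [mk_mem_linf, hg2]
      simp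
  · rw [key]
    exact ⟨hTS, hTm.2⟩
  · rintro X ⟨hXl, ℓ, hl, hPl, hn, hX⟩
    obtain ⟨Q, hQ, hQl, hPQ⟩ := hfw ℓ hl hPl hn
    exact ⟨hXl, P, Q, hP, hQ, hPQ, ℓ, hl, hPl, hQl, hX⟩

end TangentSplashPaper
end

section
/- Let q be a prime power and let π be an order-q-subplane of PG(2,q³) tangent to ℓ∞ at T, with tangent splash S_T. For a point P of π not on ℓ∞, let t_P = { ℓ̄ ∩ ℓ∞ : ℓ a line of π through P }. Then the map P ↦ t_P is a bijection from the q²+q points of π not on ℓ∞ onto the set of order-q-sublines of ℓ∞ that contain T and are contained in S_T; in particular, S_T contains exactly q²+q order-q-sublines through T. -/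
namespace TangentSplashPaper

open Projectivization

section Helpers

variable {F K : Type} [Field F] [Field K] [Algebra F K]

/-- total version of the map from vectors to points -/
noncomputable def pt (v : Fin 3 → K) : PGPoint K :=
  open Classical in
  if h : v ≠ 0 then Projectivization.mk K v h
  else Projectivization.mk K (fun _ => 1) (fun h => one_ne_zero (congrFun h 0))

lemma pt_of_ne {v : Fin 3 → K} (h : v ≠ 0) : pt v = Projectivization.mk K v h := by
  simp [pt, h]

lemma pt_eq_iff {v w : Fin 3 → K} (hv : v ≠ 0) (hw : w ≠ 0) :
    pt v = pt w ↔ ∃ c : K, c ≠ 0 ∧ v = c • w := by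
  rw [pt_of_ne hv, pt_of_ne hw, Projectivization.mk_eq_mk_iff']
  constructor
  · rintro ⟨c, rfl⟩
    refine ⟨c, ?_, rfl⟩
    rintro rfl
    simp at hv
  · rintro ⟨c, _, rfl⟩
    exact ⟨c, rfl⟩

lemma pt_smul {c : K} (hc : c ≠ 0) {v : Fin 3 → K} (hv : v ≠ 0) : pt (c • v) = pt v :=
  (pt_eq_iff (smul_ne_zero hc hv) hv).2 ⟨c, hc, rfl⟩

lemma pt_surj (P : PGPoint K) : ∃ v : Fin 3 → K, v ≠ 0 ∧ P = pt v := by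
  refine ⟨P.rep, P.rep_nonzero, ?_⟩
  rw [pt_of_ne P.rep_nonzero, P.mk_rep]

lemma pt_mem_linf {v : Fin 3 → K} (hv : v ≠ 0) : pt v ∈ linf K ↔ v 2 = 0 := by
  rw [pt_of_ne hv]
  obtain ⟨a, ha⟩ := Projectivization.exists_smul_eq_mk_rep K v hv
  change (Projectivization.mk K v hv).rep 2 = 0 ↔ _
  rw [← ha]
  simp [Units.smul_def]

lemma pt_mem_sub {v : Fin 3 → K} (hv : v ≠ 0) (W : Submodule K (Fin 3 → K)) :
    (pt v).submodule ≤ W ↔ v ∈ W := by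
  rw [pt_of_ne hv, Projectivization.submodule_mk, Submodule.span_singleton_le_iff_mem]

lemma linf_isLine : IsLine (linf K) := by
  let φ : (Fin 3 → K) →ₗ[K] K := LinearMap.proj 2
  refine ⟨LinearMap.ker φ, ?_, ?_⟩
  · have h := LinearMap.finrank_range_add_finrank_ker φ
    have h2 : LinearMap.range φ = ⊤ :=
      LinearMap.range_eq_top.2 (LinearMap.proj_surjective 2)
    rw [h2] at h
    simp at h
    omega
  · ext P
    obtain ⟨v, hv, rfl⟩ := pt_surj P
    rw [pt_mem_linf hv, Set.mem_ofPred_eq, pt_mem_sub hv]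
    rfl

/-- two points span -/
lemma pair_indep {v w : Fin 3 → K} (hv : v ≠ 0) (hw : w ≠ 0) (h : pt v ≠ pt w) :
    LinearIndependent K ![v, w] := by
  rw [LinearIndependent.pair_iff]
  intro s t hst
  by_cases hs : s = 0
  · subst hs
    refine ⟨rfl, ?_⟩
    simpa [hw] using hst
  · exfalso
    by_cases ht : t = 0
    · subst ht
      simp [hs, hv] at hst
    · apply h
      rw [pt_eq_iff hv hw]
      refine ⟨-(s⁻¹ * t), by simp [hs, ht], ?_⟩
      have : s⁻¹ • (s • v + t • w) = 0 := by rw [hst, smul_zero]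
      rw [smul_add, smul_smul, smul_smul, inv_mul_cancel₀ hs, one_smul] at this
      rw [neg_smul]
      exact eq_neg_of_add_eq_zero_left this

lemma line_mem_iff {v w : Fin 3 → K} (hv : v ≠ 0) (hw : w ≠ 0) (h : pt v ≠ pt w)
    {ℓ : Set (PGPoint K)} (hl : IsLine ℓ) (h1 : pt v ∈ ℓ) (h2 : pt w ∈ ℓ)
    {u : Fin 3 → K} (hu : u ≠ 0) : pt u ∈ ℓ ↔ ∃ a b : K, u = a • v + b • w := by
  obtain ⟨W, hW, rfl⟩ := hl
  rw [Set.mem_ofPred_eq, pt_mem_sub hv] at h1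
  rw [Set.mem_ofPred_eq, pt_mem_sub hw] at h2
  rw [Set.mem_ofPred_eq, pt_mem_sub hu]
  have hi := pair_indep hv hw h
  have hle : Submodule.span K (Set.range ![v, w]) ≤ W := by
    rw [Submodule.span_le]
    rintro _ ⟨i, rfl⟩
    fin_cases i
    · exact h1
    · exact h2
  have hEq : Submodule.span K (Set.range ![v, w]) = W := by
    apply Submodule.eq_of_le_of_finrank_eq hle
    rw [finrank_span_eq_card hi, hW]
    simp
  rw [← hEq, Submodule.mem_span_range_iff_exists_fun]
  constructor
  · rintro ⟨c, rfl⟩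
    exact ⟨c 0, c 1, by simp [Fin.sum_univ_two]⟩
  · rintro ⟨a, b, rfl⟩
    exact ⟨![a, b], by simp [Fin.sum_univ_two]⟩

lemma exists_line {v w : Fin 3 → K} (hv : v ≠ 0) (hw : w ≠ 0) (h : pt v ≠ pt w) :
    ∃ ℓ : Set (PGPoint K), IsLine ℓ ∧ pt v ∈ ℓ ∧ pt w ∈ ℓ := by
  refine ⟨_, ⟨Submodule.span K (Set.range ![v, w]), ?_, rfl⟩, ?_, ?_⟩
  · rw [finrank_span_eq_card (pair_indep hv hw h)]
    simp
  · rw [Set.mem_ofPred_eq, pt_mem_sub hv]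
    exact Submodule.subset_span ⟨0, rfl⟩
  · rw [Set.mem_ofPred_eq, pt_mem_sub hw]
    exact Submodule.subset_span ⟨1, rfl⟩

variable (F) in
/-- points of the F-lattice spanned by `e` -/
def SP (e : Fin 3 → Fin 3 → K) : Set (PGPoint K) :=
  {P | ∃ v ∈ Submodule.span F (Set.range e), v ≠ 0 ∧ P = pt v}

lemma hmap_image (f : (Fin 3 → K) ≃ₗ[K] (Fin 3 → K)) :
    hmap f '' basePlane F K = SP F (fun i => f (Pi.single i 1)) := by
  have key : ∀ c : Fin 3 → F, f (fun i => algebraMap F K (c i)) =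
      ∑ i, c i • f (Pi.single i 1) := by
    intro c
    have : (fun i => algebraMap F K (c i)) =
        ∑ i, algebraMap F K (c i) • (Pi.single i 1 : Fin 3 → K) := by
      ext j
      fin_cases j <;> simp [Fin.sum_univ_three, Algebra.smul_def]
    rw [this, map_sum]
    refine Finset.sum_congr rfl fun i _ => ?_
    rw [map_smul, algebraMap_smul]
  have hm : ∀ (v : Fin 3 → K) (hv : v ≠ 0), hmap f (Projectivization.mk K v hv) = pt (f v) := by
    intro v hv
    have : f v ≠ 0 := by simpa using hv
    rw [pt_of_ne this]
    rfl
  ext P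
  constructor
  · rintro ⟨_, ⟨v, hv, rfl, hr⟩, rfl⟩
    choose c hc using hr
    have hvc : v = fun i => algebraMap F K (c i) := by
      ext i; exact (hc i).symm
    refine ⟨f v, ?_, by simpa using hv, hm v hv⟩
    rw [Submodule.mem_span_range_iff_exists_fun]
    exact ⟨c, by rw [hvc, key]⟩
  · rintro ⟨v, hv, h0, rfl⟩
    rw [Submodule.mem_span_range_iff_exists_fun] at hv
    obtain ⟨c, rfl⟩ := hv
    rw [← key] at h0 ⊢
    have h1 : (fun i => algebraMap F K (c i)) ≠ 0 := by
      intro h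
      rw [h] at h0
      simp at h0
    exact ⟨_, ⟨_, h1, rfl, fun i => ⟨c i, rfl⟩⟩, hm _ h1⟩

lemma isSubplane_iff (S : Set (PGPoint K)) :
    IsSubplane F S ↔ ∃ e : Fin 3 → Fin 3 → K, LinearIndependent K e ∧ S = SP F e := by
  constructor
  · rintro ⟨f, rfl⟩
    refine ⟨_, ?_, hmap_image f⟩
    have := (Pi.basisFun K (Fin 3)).linearIndependent.map' f.toLinearMap f.ker
    have h2 : (fun i => f (Pi.single i 1)) =
        (f.toLinearMap ∘ (Pi.basisFun K (Fin 3)) : Fin 3 → Fin 3 → K) := by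
      ext i
      simp
    rw [h2]
    exact this
  · rintro ⟨e, he, rfl⟩
    let b := basisOfLinearIndependentOfCardEqFinrank he (by simp)
    refine ⟨b.equivFun.symm, ?_⟩
    rw [hmap_image]
    congr 1
    ext i j
    fin_cases i <;> simp [b, Fin.sum_univ_three]

lemma change_frame {e : Fin 3 → Fin 3 → K} (he : LinearIndependent K e) {P Q : PGPoint K}
    (hP : P ∈ SP F e) (hQ : Q ∈ SP F e) (hPQ : P ≠ Q) :
    ∃ e' : Fin 3 → Fin 3 → K, LinearIndependent K e' ∧ SP F e' = SP F e ∧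
      P = pt (e' 0) ∧ Q = pt (e' 1) := by
  obtain ⟨p, hp, hp0, rfl⟩ := hP
  obtain ⟨r, hr, hr0, rfl⟩ := hQ
  have heF : LinearIndependent F e := he.restrict_scalars (R := F) (by
    intro a b h
    simpa [Algebra.smul_def] using h)
  set L := Submodule.span F (Set.range e) with hL
  have : FiniteDimensional F L := FiniteDimensional.span_of_finite F (Set.finite_range e)
  have hdim : Module.finrank F L = 3 := by
    rw [hL, finrank_span_eq_card heF]; simp
  have hpr : LinearIndependent F ![p, r] :=
    (pair_indep hp0 hr0 hPQ).restrict_scalars (R := F) (by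
      intro a b h
      simpa [Algebra.smul_def] using h)
  have hpL : Submodule.span F (Set.range ![p, r]) ≤ L := by
    rw [Submodule.span_le]
    rintro _ ⟨i, rfl⟩
    fin_cases i
    · exact hp
    · exact hr
  have : ∃ s ∈ L, s ∉ Submodule.span F (Set.range ![p, r]) := by
    by_contra! hcon
    have heq : L = Submodule.span F (Set.range ![p, r]) := le_antisymm hcon hpL
    have h2 := finrank_span_eq_card hpr
    rw [← heq, hdim] at h2
    simp at h2
  obtain ⟨s, hsL, hs⟩ := this
  have hi : LinearIndependent F (Fin.cons s ![p, r] : Fin 3 → Fin 3 → K) :=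
    linearIndependent_finCons.2 ⟨hpr, hs⟩
  have hi' : LinearIndependent F ![p, r, s] := by
    have := hi.comp ![1, 2, 0] (by decide)
    convert this using 1
    ext i j
    fin_cases i <;> rfl
  have hle : Submodule.span F (Set.range ![p, r, s]) ≤ L := by
    rw [Submodule.span_le]
    rintro _ ⟨i, rfl⟩
    fin_cases i
    · exact hp
    · exact hr
    · exact hsL
  have hEq : Submodule.span F (Set.range ![p, r, s]) = L := by
    apply Submodule.eq_of_le_of_finrank_eq hle
    rw [finrank_span_eq_card hi', hdim]
    simp
  refine ⟨![p, r, s], ?_, ?_, rfl, rfl⟩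
  · apply linearIndependent_of_top_le_span_of_card_eq_finrank
    · rw [← he.span_eq_top_of_card_eq_finrank' (by simp), Submodule.span_le]
      have h1 : L ≤ (Submodule.span K (Set.range ![p, r, s])).restrictScalars F := by
        rw [← hEq, Submodule.span_le]
        exact Submodule.subset_span
      intro x hx
      exact h1 (Submodule.subset_span hx)
    · simp
  · ext P
    simp only [SP, Set.mem_ofPred_eq, hEq, hL]

/-- linear combination of a frame -/
def cb (e : Fin 3 → Fin 3 → K) (a b c : K) : Fin 3 → K := a • e 0 + b • e 1 + c • e 2

lemma cb_smul (e : Fin 3 → Fin 3 → K) (k a b c : K) :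
    k • cb e a b c = cb e (k * a) (k * b) (k * c) := by
  simp only [cb, smul_add, smul_smul]

lemma cb_add (e : Fin 3 → Fin 3 → K) (a b c a' b' c' : K) :
    cb e a b c + cb e a' b' c' = cb e (a + a') (b + b') (c + c') := by
  simp only [cb]
  module

lemma cb_two (e : Fin 3 → Fin 3 → K) (a b c : K) :
    cb e a b c 2 = a * e 0 2 + b * e 1 2 + c * e 2 2 := by
  simp [cb]

lemma cb_eq_zero {e : Fin 3 → Fin 3 → K} (he : LinearIndependent K e) {a b c : K} :
    cb e a b c = 0 ↔ a = 0 ∧ b = 0 ∧ c = 0 := by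
  constructor
  · intro h
    have := Fintype.linearIndependent_iff.1 he ![a, b, c] (by
      simpa [Fin.sum_univ_three, cb] using h)
    exact ⟨this 0, this 1, this 2⟩
  · rintro ⟨rfl, rfl, rfl⟩
    simp [cb]

lemma cb_inj {e : Fin 3 → Fin 3 → K} (he : LinearIndependent K e) {a b c a' b' c' : K} :
    cb e a b c = cb e a' b' c' ↔ a = a' ∧ b = b' ∧ c = c' := by
  constructor
  · intro h
    have h1 : cb e (a - a') (b - b') (c - c') = 0 := by
      have : cb e (a - a') (b - b') (c - c') = cb e a b c - cb e a' b' c' := by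
        simp only [cb]
        module
      rw [this, h, sub_self]
    rw [cb_eq_zero he] at h1
    simpa [sub_eq_zero] using h1
  · rintro ⟨rfl, rfl, rfl⟩
    rfl

lemma cb_surj {e : Fin 3 → Fin 3 → K} (he : LinearIndependent K e) (v : Fin 3 → K) :
    ∃ a b c : K, v = cb e a b c := by
  have h : v ∈ Submodule.span K (Set.range e) := by
    rw [he.span_eq_top_of_card_eq_finrank' (by simp)]
    trivial
  rw [Submodule.mem_span_range_iff_exists_fun] at h
  obtain ⟨c, rfl⟩ := h
  exact ⟨c 0, c 1, c 2, by simp [cb, Fin.sum_univ_three]⟩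

lemma mem_SP {e : Fin 3 → Fin 3 → K} (he : LinearIndependent K e) {P : PGPoint K} :
    P ∈ SP F e ↔ ∃ x y z : F, (x ≠ 0 ∨ y ≠ 0 ∨ z ≠ 0) ∧
      P = pt (cb e (algebraMap F K x) (algebraMap F K y) (algebraMap F K z)) := by
  have hnz : ∀ x y z : F, (x ≠ 0 ∨ y ≠ 0 ∨ z ≠ 0) ↔
      cb e (algebraMap F K x) (algebraMap F K y) (algebraMap F K z) ≠ 0 := by
    intro x y z
    simp only [ne_eq, cb_eq_zero he, map_eq_zero]
    tauto
  constructor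
  · rintro ⟨v, hv, h0, rfl⟩
    rw [Submodule.mem_span_range_iff_exists_fun] at hv
    obtain ⟨c, rfl⟩ := hv
    have : ∑ i, c i • e i = cb e (algebraMap F K (c 0)) (algebraMap F K (c 1))
        (algebraMap F K (c 2)) := by
      simp only [cb, Fin.sum_univ_three, algebraMap_smul]
    rw [this] at h0 ⊢
    exact ⟨c 0, c 1, c 2, (hnz _ _ _).2 h0, rfl⟩
  · rintro ⟨x, y, z, h, rfl⟩
    refine ⟨_, ?_, (hnz _ _ _).1 h, rfl⟩
    rw [Submodule.mem_span_range_iff_exists_fun]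
    exact ⟨![x, y, z], by simp [cb, Fin.sum_univ_three, algebraMap_smul]⟩

lemma pt_cb_eq {e : Fin 3 → Fin 3 → K} (he : LinearIndependent K e) {a b c a' b' c' : K}
    (h : a ≠ 0 ∨ b ≠ 0 ∨ c ≠ 0) (h' : a' ≠ 0 ∨ b' ≠ 0 ∨ c' ≠ 0) :
    pt (cb e a b c) = pt (cb e a' b' c') ↔
      ∃ k : K, k ≠ 0 ∧ a = k * a' ∧ b = k * b' ∧ c = k * c' := by
  rw [pt_eq_iff]
  · simp only [cb_smul, cb_inj he]
  · rw [Ne, cb_eq_zero he]; tauto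
  · rw [Ne, cb_eq_zero he]; tauto

lemma cb_ne {e : Fin 3 → Fin 3 → K} (he : LinearIndependent K e) {a b c : K}
    (h : a ≠ 0 ∨ b ≠ 0 ∨ c ≠ 0) : cb e a b c ≠ 0 := by
  rw [Ne, cb_eq_zero he]; tauto

lemma SP_inter_line {e : Fin 3 → Fin 3 → K} (he : LinearIndependent K e)
    {ℓ : Set (PGPoint K)} (hl : IsLine ℓ) (h0 : pt (cb e 1 0 0) ∈ ℓ) (h1 : pt (cb e 0 1 0) ∈ ℓ) :
    SP F e ∩ ℓ = insert (pt (cb e 1 0 0))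
      (Set.range fun t : F => pt (cb e (algebraMap F K t) 1 0)) := by
  have hne : pt (cb e 1 0 0) ≠ pt (cb e 0 1 0) := by
    rw [Ne, pt_cb_eq he (by simp) (by simp)]
    rintro ⟨k, hk, h, _⟩
    simp at h
  have hmem : ∀ a b c : K, (a ≠ 0 ∨ b ≠ 0 ∨ c ≠ 0) → (pt (cb e a b c) ∈ ℓ ↔ c = 0) := by
    intro a b c h
    rw [line_mem_iff (cb_ne he (by simp)) (cb_ne he (by simp)) hne hl h0 h1 (cb_ne he h)]
    simp only [cb_smul, cb_add, cb_inj he]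
    constructor
    · rintro ⟨s, t, _, _, h⟩
      simpa using h
    · rintro rfl
      exact ⟨a, b, by simp⟩
  ext P
  constructor
  · rintro ⟨hP, hPl⟩
    obtain ⟨x, y, z, h, rfl⟩ := (mem_SP he).1 hP
    have hK : algebraMap F K x ≠ 0 ∨ algebraMap F K y ≠ 0 ∨ algebraMap F K z ≠ 0 := by
      simpa using h
    have hz : algebraMap F K z = 0 := (hmem _ _ _ hK).1 hPl
    have hz' : z = 0 := by simpa using hz
    subst hz'
    by_cases hy : y = 0
    · left
      have hx : x ≠ 0 := by tauto
      rw [pt_cb_eq he hK (by simp)]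
      exact ⟨algebraMap F K x, by simpa using hx, by simp [hy]⟩
    · right
      refine ⟨x / y, ?_⟩
      rw [pt_cb_eq he (by simp) hK]
      have hy' : algebraMap F K y ≠ 0 := by simpa using hy
      refine ⟨(algebraMap F K y)⁻¹, by simpa using hy, ?_, ?_, ?_⟩
      · simp [div_eq_mul_inv, mul_comm]
      · field_simp
      · simp
  · rintro (rfl | ⟨t, rfl⟩)
    · refine ⟨?_, h0⟩
      rw [mem_SP he]
      exact ⟨1, 0, 0, by simp, by simp⟩
    · refine ⟨?_, ?_⟩
      · rw [mem_SP he]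
        exact ⟨t, 1, 0, by simp, by simp⟩
      · rw [hmem _ _ _ (by simp)]

lemma insert_ncard [Fintype F] {e : Fin 3 → Fin 3 → K} (he : LinearIndependent K e) :
    (insert (pt (cb e 1 0 0))
      (Set.range fun t : F => pt (cb e (algebraMap F K t) 1 0))).ncard = Fintype.card F + 1 := by
  rw [Set.ncard_insert_of_notMem]
  · rw [← Set.image_univ, Set.ncard_image_of_injective, Set.ncard_univ, Nat.card_eq_fintype_card]
    intro s t hst
    have := (pt_cb_eq he (by simp) (by simp)).1 hst
    obtain ⟨k, hk, h1, h2, _⟩ := this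
    have : k = 1 := by simpa using h2.symm
    subst this
    simpa using h1
  · rintro ⟨t, ht⟩
    obtain ⟨k, hk, h1, h2, _⟩ := (pt_cb_eq he (by simp) (by simp)).1 ht
    simp at h2

lemma cb_e0 (e : Fin 3 → Fin 3 → K) : cb e 1 0 0 = e 0 := by simp [cb]
lemma cb_e1 (e : Fin 3 → Fin 3 → K) : cb e 0 1 0 = e 1 := by simp [cb]

/-- The structure of the intersection of a subplane with a secant line. -/
lemma secant {e : Fin 3 → Fin 3 → K} (he : LinearIndependent K e) {P Q : PGPoint K}
    (hP : P ∈ SP F e) (hQ : Q ∈ SP F e) (hPQ : P ≠ Q) {ℓ : Set (PGPoint K)} (hl : IsLine ℓ)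
    (hPl : P ∈ ℓ) (hQl : Q ∈ ℓ) :
    ∃ e' : Fin 3 → Fin 3 → K, LinearIndependent K e' ∧ P = pt (cb e' 1 0 0) ∧
      Q = pt (cb e' 0 1 0) ∧
      SP F e ∩ ℓ = insert (pt (cb e' 1 0 0))
      (Set.range fun t : F => pt (cb e' (algebraMap F K t) 1 0)) := by
  obtain ⟨e', he', hS, rfl, rfl⟩ := change_frame he hP hQ hPQ
  refine ⟨e', he', by rw [cb_e0], by rw [cb_e1], ?_⟩
  rw [← hS]
  exact SP_inter_line he' hl (by rwa [cb_e0]) (by rwa [cb_e1])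

lemma secant_ncard [Fintype F] {e : Fin 3 → Fin 3 → K} (he : LinearIndependent K e)
    {P Q : PGPoint K}
    (hP : P ∈ SP F e) (hQ : Q ∈ SP F e) (hPQ : P ≠ Q) {ℓ : Set (PGPoint K)} (hl : IsLine ℓ)
    (hPl : P ∈ ℓ) (hQl : Q ∈ ℓ) : (SP F e ∩ ℓ).ncard = Fintype.card F + 1 := by
  obtain ⟨e', he', _, _, h⟩ := secant he hP hQ hPQ hl hPl hQl
  rw [h, insert_ncard he']

variable (F) in
/-- frame adapted to a tangent subplane -/
structure TF (e : Fin 3 → Fin 3 → K) : Prop where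
  ind : LinearIndependent K e
  h0 : e 0 2 = 0
  hab : ∀ x y : F, algebraMap F K x * e 1 2 + algebraMap F K y * e 2 2 = 0 → x = 0 ∧ y = 0

lemma exists_TF {π : Set (PGPoint K)} {T : PGPoint K} (hπ : IsSubplane F π)
    (htan : π ∩ linf K = {T}) :
    ∃ e : Fin 3 → Fin 3 → K, TF F e ∧ π = SP F e ∧ T = pt (cb e 1 0 0) := by
  obtain ⟨e, he, rfl⟩ := (isSubplane_iff π).1 hπ
  have hT : T ∈ SP F e ∩ linf K := by rw [htan]; rfl
  have : ∃ Q ∈ SP F e, T ≠ Q := by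
    by_contra! hcon
    have h1 := hcon (pt (cb e 1 0 0)) ((mem_SP he).2 ⟨1, 0, 0, by simp, by simp⟩)
    have h2 := hcon (pt (cb e 0 1 0)) ((mem_SP he).2 ⟨0, 1, 0, by simp, by simp⟩)
    obtain ⟨k, hk, h, _⟩ := (pt_cb_eq he (by simp) (by simp)).1 (h1.symm.trans h2)
    simp at h
  obtain ⟨Q, hQ, hTQ⟩ := this
  obtain ⟨e', he', hS, hT', _⟩ := change_frame he hT.1 hQ hTQ
  rw [← hS] at htan
  have h0 : e' 0 2 = 0 := by
    have := hT.2
    rwa [hT', pt_mem_linf (he'.ne_zero 0)] at this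
  refine ⟨e', ⟨he', h0, ?_⟩, hS.symm, by rw [cb_e0]; exact hT'⟩
  intro x y hxy
  by_contra hcon
  have hnz : (0 : F) ≠ 0 ∨ x ≠ 0 ∨ y ≠ 0 := by tauto
  have hK : algebraMap F K 0 ≠ 0 ∨ algebraMap F K x ≠ 0 ∨ algebraMap F K y ≠ 0 := by
    simpa using hnz
  have hm : pt (cb e' (algebraMap F K 0) (algebraMap F K x) (algebraMap F K y)) ∈
      SP F e' ∩ linf K := by
    refine ⟨(mem_SP he').2 ⟨0, x, y, hnz, rfl⟩, ?_⟩
    rw [pt_mem_linf (cb_ne he' hK), cb_two]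
    simpa using hxy
  rw [htan, Set.mem_singleton_iff, hT', ← cb_e0 e'] at hm
  obtain ⟨k, hk, h, _⟩ := (pt_cb_eq he' hK (by simp)).1 hm
  simp at h
  exact hk h.symm

lemma TF.a_ne {e : Fin 3 → Fin 3 → K} (h : TF F e) : e 1 2 ≠ 0 := by
  intro h1
  have := h.hab 1 0 (by simp [h1])
  simp at this

lemma TF.s_ne {e : Fin 3 → Fin 3 → K} (h : TF F e) {x y : F} (hxy : x ≠ 0 ∨ y ≠ 0) :
    algebraMap F K x * e 1 2 + algebraMap F K y * e 2 2 ≠ 0 := by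
  intro h1
  have := h.hab x y h1
  tauto

lemma TF.inj {e : Fin 3 → Fin 3 → K} (h : TF F e) {m n m' n' : F}
    (hh : algebraMap F K m * e 1 2 + algebraMap F K n * e 2 2 =
      algebraMap F K m' * e 1 2 + algebraMap F K n' * e 2 2) : m = m' ∧ n = n' := by
  have := h.hab (m - m') (n - n') (by
    simp only [map_sub]
    linear_combination hh)
  simpa [sub_eq_zero] using this

/-- affine coordinate on the line at infinity -/
noncomputable def psi (e : Fin 3 → Fin 3 → K) (u : K) : PGPoint K :=
  pt (cb e u (- e 2 2) (e 1 2))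

lemma TF.cb_linf {e : Fin 3 → Fin 3 → K} (h : TF F e) {a b c : K}
    (hn : a ≠ 0 ∨ b ≠ 0 ∨ c ≠ 0) :
    pt (cb e a b c) ∈ linf K ↔ b * e 1 2 + c * e 2 2 = 0 := by
  rw [pt_mem_linf (cb_ne h.ind hn), cb_two, h.h0]
  simp

lemma TF.psi_nz {e : Fin 3 → Fin 3 → K} (h : TF F e) (u : K) :
    u ≠ 0 ∨ - e 2 2 ≠ 0 ∨ e 1 2 ≠ 0 := Or.inr (Or.inr h.a_ne)

lemma TF.psi_linf {e : Fin 3 → Fin 3 → K} (h : TF F e) (u : K) : psi e u ∈ linf K := by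
  rw [psi, h.cb_linf (h.psi_nz u)]
  ring

lemma TF.psi_inj {e : Fin 3 → Fin 3 → K} (h : TF F e) {u v : K} (huv : psi e u = psi e v) :
    u = v := by
  obtain ⟨k, hk, h1, h2, h3⟩ := (pt_cb_eq h.ind (h.psi_nz u) (h.psi_nz v)).1 huv
  have : k = 1 := by
    have := h.a_ne
    field_simp at h3
    exact h3.symm
  simpa [this] using h1

lemma TF.psi_ne {e : Fin 3 → Fin 3 → K} (h : TF F e) (u : K) : psi e u ≠ pt (cb e 1 0 0) := by
  intro hh
  obtain ⟨k, hk, h1, h2, h3⟩ := (pt_cb_eq h.ind (h.psi_nz u) (by simp)).1 hh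
  simp at h3
  exact h.a_ne h3

variable (F) in
/-- coordinates of a point of the subplane -/
noncomputable def fp (e : Fin 3 → Fin 3 → K) (x y z : F) : PGPoint K :=
  pt (cb e (algebraMap F K x) (algebraMap F K y) (algebraMap F K z))

lemma nzK {x y z : F} (h : x ≠ 0 ∨ y ≠ 0 ∨ z ≠ 0) :
    algebraMap F K x ≠ 0 ∨ algebraMap F K y ≠ 0 ∨ algebraMap F K z ≠ 0 := by
  simpa using h

lemma fp_mem {e : Fin 3 → Fin 3 → K} (he : LinearIndependent K e) {x y z : F}
    (h : x ≠ 0 ∨ y ≠ 0 ∨ z ≠ 0) : fp F e x y z ∈ SP F e :=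
  (mem_SP he).2 ⟨x, y, z, h, rfl⟩

lemma fp_T (e : Fin 3 → Fin 3 → K) : pt (cb e 1 0 0) = fp F e 1 0 0 := by
  simp [fp]

lemma TF.mem_aff {e : Fin 3 → Fin 3 → K} (h : TF F e) {P : PGPoint K} :
    P ∈ SP F e \ linf K ↔ ∃ x y z : F, (y ≠ 0 ∨ z ≠ 0) ∧ P = fp F e x y z := by
  constructor
  · rintro ⟨hP, hl⟩
    obtain ⟨x, y, z, hn, rfl⟩ := (mem_SP h.ind).1 hP
    refine ⟨x, y, z, ?_, rfl⟩
    by_contra! hcon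
    apply hl
    rw [h.cb_linf (nzK hn), hcon.1, hcon.2]
    simp
  · rintro ⟨x, y, z, hn, rfl⟩
    refine ⟨fp_mem h.ind (Or.inr hn), ?_⟩
    rw [fp, h.cb_linf (nzK (Or.inr hn))]
    exact h.s_ne hn

lemma trace_mem [Fintype F] {e : Fin 3 → Fin 3 → K} (h : TF F e) {x y z x' y' z' : F}
    (hn : y ≠ 0 ∨ z ≠ 0) (hn' : x' ≠ 0 ∨ y' ≠ 0 ∨ z' ≠ 0)
    (hne : fp F e x y z ≠ fp F e x' y' z') {u v w : K} (hnz : u ≠ 0 ∨ v ≠ 0 ∨ w ≠ 0)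
    (hl : pt (cb e u v w) ∈ linf K) (s t : K)
    (h1 : u = s * algebraMap F K x + t * algebraMap F K x')
    (h2 : v = s * algebraMap F K y + t * algebraMap F K y')
    (h3 : w = s * algebraMap F K z + t * algebraMap F K z') :
    pt (cb e u v w) ∈ pencilTrace (Fintype.card F) (SP F e) (fp F e x y z) := by
  have hp := cb_ne h.ind (nzK (K := K) (x := x) (Or.inr hn))
  have hr := cb_ne h.ind (nzK (K := K) hn')
  obtain ⟨ℓ, hℓ, hP, hQ⟩ := exists_line hp hr hne
  refine ⟨hl, ℓ, hℓ, hP, ?_, ?_⟩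
  · exact secant_ncard h.ind (fp_mem h.ind (Or.inr hn)) (fp_mem h.ind hn') hne hℓ hP hQ
  · rw [line_mem_iff hp hr hne hℓ hP hQ (cb_ne h.ind hnz)]
    refine ⟨s, t, ?_⟩
    rw [cb_smul, cb_smul, cb_add, h1, h2, h3]

lemma trace_eq [Fintype F] {e : Fin 3 → Fin 3 → K} (h : TF F e) {x y z : F}
    (hn : y ≠ 0 ∨ z ≠ 0) :
    pencilTrace (Fintype.card F) (SP F e) (fp F e x y z) = insert (pt (cb e 1 0 0))
      {X | ∃ m n : F, m * z - n * y = x ∧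
        X = psi e (algebraMap F K m * e 1 2 + algebraMap F K n * e 2 2)} := by
  have hp := cb_ne h.ind (nzK (K := K) (x := x) (Or.inr hn))
  have hs := h.s_ne hn
  ext X
  constructor
  · rintro ⟨hX, ℓ, hℓ, hPl, hcard, hXl⟩
    obtain ⟨Q, hQ, hne⟩ := Set.exists_ne_of_one_lt_ncard (s := SP F e ∩ ℓ)
      (by rw [hcard]; have := Fintype.card_pos (α := F); omega) (fp F e x y z)
    obtain ⟨x', y', z', hn', rfl⟩ := (mem_SP h.ind).1 hQ.1
    have hr := cb_ne h.ind (nzK (K := K) hn')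
    obtain ⟨v, hv, rfl⟩ := pt_surj X
    obtain ⟨s, t, rfl⟩ := (line_mem_iff hp hr hne.symm hℓ hPl hQ.2 hv).1 hXl
    rw [cb_smul, cb_smul, cb_add] at hv hX ⊢
    have hv' := hv
    rw [Ne, cb_eq_zero h.ind] at hv'
    have hv2 : s * algebraMap F K x + t * algebraMap F K x' ≠ 0 ∨
      s * algebraMap F K y + t * algebraMap F K y' ≠ 0 ∨
      s * algebraMap F K z + t * algebraMap F K z' ≠ 0 := by tauto
    rw [h.cb_linf hv2] at hX
    set α := e 1 2 with hα
    set β := e 2 2 with hβ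
    have ht : t ≠ 0 := by
      rintro rfl
      have : s * (algebraMap F K y * α + algebraMap F K z * β) = 0 := by
        linear_combination hX
      rcases mul_eq_zero.1 this with h0 | h0
      · subst h0
        simp at hv2
      · exact hs h0
    set sp := algebraMap F K y * α + algebraMap F K z * β with hsp
    have hsv : s = - t * (algebraMap F K y' * α + algebraMap F K z' * β) / sp := by
      rw [eq_div_iff hs]
      linear_combination hX
    by_cases hD : y' * z - y * z' = 0
    · left
      have hD' : algebraMap F K y' * algebraMap F K z - algebraMap F K y * algebraMap F K z' = 0 := by
        rw [← map_mul, ← map_mul, ← map_sub, hD, map_zero]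
      have c1 : s * algebraMap F K y + t * algebraMap F K y' = 0 := by
        rw [hsv]
        field_simp
        rw [hsp]
        linear_combination t * β * hD'
      have c2 : s * algebraMap F K z + t * algebraMap F K z' = 0 := by
        rw [hsv]
        field_simp
        rw [hsp]
        linear_combination -t * α * hD'
      rw [pt_cb_eq h.ind hv2 (by simp), c1, c2]
      refine ⟨_, ?_, (mul_one _).symm, by simp, by simp⟩
      rw [c1, c2] at hv2
      simpa using hv2
    · right
      refine ⟨(y' * x - y * x') / (y' * z - y * z'), (z' * x - z * x') / (y' * z - y * z'), ?_, ?_⟩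
      · field_simp
        ring
      · have hD' : algebraMap F K y' * algebraMap F K z - algebraMap F K y * algebraMap F K z' ≠ 0 := by
          rw [← map_mul, ← map_mul, ← map_sub]
          exact (map_ne_zero _).2 hD
        rw [psi, pt_cb_eq h.ind hv2 (h.psi_nz _)]
        refine ⟨-t * (algebraMap F K y' * algebraMap F K z - algebraMap F K y * algebraMap F K z') / sp,
          ?_, ?_, ?_, ?_⟩
        · exact div_ne_zero (mul_ne_zero (neg_ne_zero.2 ht) hD') hs
        · rw [hsv]
          simp only [map_div₀, map_sub, map_mul]
          generalize algebraMap F K y' * algebraMap F K z -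
            algebraMap F K y * algebraMap F K z' = D at hD' ⊢
          field_simp
          rw [hsp]
          ring
        · rw [hsv]
          field_simp
          rw [hsp]
          ring
        · rw [hsv]
          field_simp
          rw [hsp]
          ring
  · rintro (rfl | ⟨m, n, hmn, rfl⟩)
    · apply trace_mem h hn (x' := 1) (y' := 0) (z' := 0) (by simp) _ (by simp) _ 0 1 (by simp)
        (by simp) (by simp)
      · intro hh
        obtain ⟨k, hk, h1, h2, h3⟩ := (pt_cb_eq h.ind (nzK (Or.inr hn)) (nzK (by simp))).1 hh
        simp at h2 h3
        tauto
      · rw [h.cb_linf (by simp)]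
        simp
    · have hl := h.psi_linf (algebraMap F K m * e 1 2 + algebraMap F K n * e 2 2)
      by_cases hz : z = 0
      · have hy : y ≠ 0 := by tauto
        have hyK : algebraMap F K y ≠ 0 := by simpa using hy
        subst hz
        apply trace_mem h hn (x' := m) (y' := 0) (z' := 1) (by simp) _ (h.psi_nz _) hl
          (- e 2 2 / algebraMap F K y) (e 1 2)
        · rw [← hmn]
          simp
          field_simp
          ring
        · simp
          field_simp
        · simp
        · intro hh
          obtain ⟨k, hk, h1, h2, h3⟩ := (pt_cb_eq h.ind (nzK (Or.inr hn)) (nzK (by simp))).1 hh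
          simp at h2
          exact hy h2
      · have hzK : algebraMap F K z ≠ 0 := by simpa using hz
        apply trace_mem h hn (x' := -n) (y' := 1) (z' := 0) (by simp) _ (h.psi_nz _) hl
          (e 1 2 / algebraMap F K z) (- e 2 2 - e 1 2 * algebraMap F K y / algebraMap F K z)
        · rw [← hmn]
          simp
          field_simp
          ring
        · simp
          field_simp
          ring
        · simp
          field_simp
        · intro hh
          obtain ⟨k, hk, h1, h2, h3⟩ := (pt_cb_eq h.ind (nzK (Or.inr hn)) (nzK (by simp))).1 hh
          simp at h3
          exact hz h3

lemma trace_sub_splash [Fintype F] {e : Fin 3 → Fin 3 → K} {P : PGPoint K} (hP : P ∈ SP F e) :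
    pencilTrace (Fintype.card F) (SP F e) P ⊆ splash (SP F e) := by
  rintro X ⟨hX, ℓ, hℓ, hPl, hcard, hXl⟩
  obtain ⟨Q, hQ, hne⟩ := Set.exists_ne_of_one_lt_ncard (s := SP F e ∩ ℓ)
    (by rw [hcard]; have := Fintype.card_pos (α := F); omega) P
  exact ⟨hX, P, Q, hP, hQ.1, hne.symm, ℓ, hℓ, hPl, hQ.2, hXl⟩

lemma splash_eq [Fintype F] {e : Fin 3 → Fin 3 → K} (h : TF F e) :
    splash (SP F e) = insert (pt (cb e 1 0 0))
      {X | ∃ m n : F, X = psi e (algebraMap F K m * e 1 2 + algebraMap F K n * e 2 2)} := by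
  apply Set.Subset.antisymm
  · rintro X ⟨hX, P, Q, hP, hQ, hne, ℓ, hℓ, hPl, hQl, hXl⟩
    have key : ∀ R, R ∈ SP F e → R ∈ ℓ → R ≠ pt (cb e 1 0 0) → X ∈ insert (pt (cb e 1 0 0))
      {X | ∃ m n : F, X = psi e (algebraMap F K m * e 1 2 + algebraMap F K n * e 2 2)} := by
      intro R hR hRl hRT
      obtain ⟨x, y, z, hn, rfl⟩ := (mem_SP h.ind).1 hR
      have hyz : y ≠ 0 ∨ z ≠ 0 := by
        by_contra! hcon
        apply hRT
        rw [pt_cb_eq h.ind (nzK hn) (by simp)]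
        refine ⟨algebraMap F K x, ?_, by simp [hcon]⟩
        simpa [hcon] using hn
      have : X ∈ pencilTrace (Fintype.card F) (SP F e) (fp F e x y z) :=
        ⟨hX, ℓ, hℓ, hRl, secant_ncard h.ind hP hQ hne hℓ hPl hQl, hXl⟩
      rw [trace_eq h hyz] at this
      rcases this with h1 | ⟨m, n, _, h1⟩
      · exact Or.inl h1
      · exact Or.inr ⟨m, n, h1⟩
    by_cases hPT : P = pt (cb e 1 0 0)
    · exact key Q hQ hQl (fun hq => hne (hPT.trans hq.symm))
    · exact key P hP hPl hPT
  · rintro X (rfl | ⟨m, n, rfl⟩)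
    · apply trace_sub_splash (fp_mem h.ind (x := 0) (y := 0) (z := 1) (by simp))
      rw [trace_eq h (by simp)]
      exact Or.inl rfl
    · apply trace_sub_splash (fp_mem h.ind (x := m) (y := 0) (z := 1) (by simp))
      rw [trace_eq h (by simp)]
      exact Or.inr ⟨m, n, by simp, rfl⟩

/-- affine form of a subline through the centre -/
def affSub (F : Type) {K : Type} [Field F] [Field K] [Algebra F K]
    (e : Fin 3 → Fin 3 → K) (s c : K) : Set (PGPoint K) :=
  insert (pt (cb e 1 0 0)) (Set.range fun t : F => psi e (s + algebraMap F K t * c))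

lemma trace_aff [Fintype F] {e : Fin 3 → Fin 3 → K} (h : TF F e) {m0 n0 y z : F}
    (hn : y ≠ 0 ∨ z ≠ 0) :
    pencilTrace (Fintype.card F) (SP F e) (fp F e (m0 * z - n0 * y) y z) =
      affSub F e (algebraMap F K m0 * e 1 2 + algebraMap F K n0 * e 2 2)
        (algebraMap F K y * e 1 2 + algebraMap F K z * e 2 2) := by
  rw [trace_eq h hn, affSub]
  congr 1
  ext X
  constructor
  · rintro ⟨m, n, hmn, rfl⟩
    have : ∃ t : F, m = m0 + t * y ∧ n = n0 + t * z := by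
      by_cases hy : y = 0
      · have hz : z ≠ 0 := by tauto
        subst hy
        refine ⟨(n - n0) / z, ?_, ?_⟩
        · have : m * z = m0 * z := by linear_combination hmn
          simpa using mul_right_cancel₀ hz this
        · field_simp
          ring
      · refine ⟨(m - m0) / y, ?_, ?_⟩
        · field_simp
          ring
        · field_simp
          linear_combination -hmn
    obtain ⟨t, rfl, rfl⟩ := this
    refine ⟨t, ?_⟩
    simp only [map_add, map_mul]
    congr 1
    ring
  · rintro ⟨t, rfl⟩
    refine ⟨m0 + t * y, n0 + t * z, by ring, ?_⟩
    simp only [map_add, map_mul]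
    congr 1
    ring

lemma exists_mn {x y z : F} (hn : y ≠ 0 ∨ z ≠ 0) : ∃ m n : F, m * z - n * y = x := by
  by_cases hy : y = 0
  · have hz : z ≠ 0 := by tauto
    exact ⟨x / z, 0, by field_simp; ring⟩
  · exact ⟨0, - x / y, by field_simp; ring⟩

lemma affSub_isSubline [Fintype F] {e : Fin 3 → Fin 3 → K} (h : TF F e) {s c : K} (hc : c ≠ 0) :
    IsSubline F (Fintype.card F) (affSub F e s c) := by
  let e' : Fin 3 → Fin 3 → K := ![cb e c 0 0, cb e s (- e 2 2) (e 1 2), cb e 0 1 0]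
  have hcb : ∀ a b d : K, cb e' a b d = cb e (a * c + b * s) (- b * e 2 2 + d) (b * e 1 2) := by
    intro a b d
    simp only [cb, e', Matrix.cons_val_zero, Matrix.cons_val_one, Matrix.cons_val]
    module
  have he' : LinearIndependent K e' := by
    rw [Fintype.linearIndependent_iff]
    intro g hg
    have h1 : cb e' (g 0) (g 1) (g 2) = 0 := by
      simpa [Fin.sum_univ_three, cb] using hg
    rw [hcb, cb_eq_zero h.ind] at h1
    obtain ⟨h1, h2, h3⟩ := h1
    have g1 : g 1 = 0 := by
      rcases mul_eq_zero.1 h3 with h3 | h3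
      · exact h3
      · exact absurd h3 h.a_ne
    rw [g1] at h1 h2
    have g2 : g 2 = 0 := by simpa using h2
    have g0 : g 0 = 0 := by simpa [hc] using h1
    intro i
    fin_cases i
    · exact g0
    · exact g1
    · exact g2
  have hT : pt (cb e' 1 0 0) = pt (cb e 1 0 0) := by
    rw [hcb, pt_cb_eq h.ind (by simp [hc]) (by simp)]
    exact ⟨c, hc, by simp⟩
  have hpsi : ∀ t : K, pt (cb e' t 1 0) = psi e (s + t * c) := by
    intro t
    rw [hcb, psi]
    congr 2 <;> ring
  have hpsi0 : pt (cb e' 0 1 0) = psi e s := by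
    rw [hpsi]; simp
  have hTl : pt (cb e 1 0 0) ∈ linf K := by
    rw [h.cb_linf (by simp)]; simp
  have hEq : SP F e' ∩ linf K = affSub F e s c := by
    rw [SP_inter_line he' linf_isLine (by rw [hT]; exact hTl) (by rw [hpsi0]; exact h.psi_linf s),
      affSub, hT]
    simp only [hpsi]
  refine ⟨SP F e', linf K, (isSubplane_iff _).2 ⟨e', he', rfl⟩, linf_isLine, ?_, hEq.symm⟩
  have := secant_ncard (F := F) he' (fp_mem he' (x := 1) (y := 0) (z := 0) (by simp))
    (fp_mem he' (x := 0) (y := 1) (z := 0) (by simp))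
    (by
      intro hh
      obtain ⟨k, hk, h1, _⟩ := (pt_cb_eq he' (by simp) (by simp)).1 hh
      simp at h1) linf_isLine
    (by simp only [fp, map_one, map_zero]; rw [hT]; exact hTl)
    (by simp only [fp, map_one, map_zero]; rw [hpsi0]; exact h.psi_linf s)
  exact this

lemma subline_aff [Fintype F] {e : Fin 3 → Fin 3 → K} (h : TF F e) {b : Set (PGPoint K)}
    (hb : IsSubline F (Fintype.card F) b) (hbl : b ⊆ linf K) (hT : pt (cb e 1 0 0) ∈ b) :
    ∃ s c : K, c ≠ 0 ∧ b = affSub F e s c := by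
  obtain ⟨S, ℓ, hS, hℓ, hcard, rfl⟩ := hb
  obtain ⟨e1, he1, rfl⟩ := (isSubplane_iff S).1 hS
  obtain ⟨Q, hQ, hne⟩ := Set.exists_ne_of_one_lt_ncard (s := SP F e1 ∩ ℓ)
    (by rw [hcard]; have := Fintype.card_pos (α := F); omega) (pt (cb e 1 0 0))
  obtain ⟨e', he', hT', hQ', hEq⟩ := secant he1 hT.1 hQ.1 hne.symm hℓ hT.2 hQ.2
  have hQl := hbl hQ
  rw [hQ', cb_e1, pt_mem_linf (he'.ne_zero 1)] at hQl
  rw [hEq, ← hT']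
  rw [cb_e0 e', pt_eq_iff (cb_ne h.ind (by simp)) (he'.ne_zero 0)] at hT'
  obtain ⟨k, hk, hk'⟩ := hT'
  obtain ⟨a, b, c, habc⟩ := cb_surj h.ind (e' 1)
  have hα := h.a_ne
  have h0 : e' 0 = cb e k⁻¹ 0 0 := by
    have : cb e k⁻¹ 0 0 = k⁻¹ • cb e 1 0 0 := by simp [cb_smul]
    rw [this, hk', smul_smul, inv_mul_cancel₀ hk, one_smul]
  rw [habc, cb_two, h.h0] at hQl
  have hb : b = - (c / e 1 2) * e 2 2 := by
    field_simp
    linear_combination hQl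
  have hc : c ≠ 0 := by
    rintro rfl
    have hb0 : b = 0 := by simpa using hb
    apply hne
    rw [hQ', cb_e1, habc, hb0]
    have ha : a ≠ 0 := by
      rintro rfl
      apply he'.ne_zero 1
      rw [habc, hb0, cb_eq_zero h.ind]
      simp
    rw [pt_cb_eq h.ind (by simp [ha]) (by simp)]
    exact ⟨a, ha, by simp⟩
  refine ⟨a * e 1 2 / c, e 1 2 * k⁻¹ / c, by simp [hα, hk, hc], ?_⟩
  rw [affSub]
  congr 2
  ext1 t
  have : cb e' (algebraMap F K t) 1 0 = cb e (algebraMap F K t * k⁻¹ + a) b c := by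
    rw [cb, h0, habc]
    simp only [cb]
    module
  rw [this, psi, pt_cb_eq h.ind (by simp [hc]) (h.psi_nz _)]
  refine ⟨c / e 1 2, div_ne_zero hc hα, ?_, ?_, ?_⟩
  · field_simp
    ring
  · rw [hb]; ring
  · field_simp

lemma aff_ncard [Fintype F] {e : Fin 3 → Fin 3 → K} (h : TF F e) :
    (SP F e \ linf K).ncard = Fintype.card F ^ 2 + Fintype.card F := by
  let g : (F × F) ⊕ F → PGPoint K :=
    Sum.elim (fun p => fp F e p.1 p.2 1) (fun x => fp F e x 1 0)
  have hg : Function.Injective g := by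
    rintro (⟨x, y⟩ | x) (⟨x', y'⟩ | x') hh
    all_goals
      simp only [g, Sum.elim_inl, Sum.elim_inr, fp] at hh
      obtain ⟨k, hk, h1, h2, h3⟩ := (pt_cb_eq h.ind (by simp) (by simp)).1 hh
    · have : k = 1 := by simpa using h3.symm
      subst this
      simp at h1 h2
      rw [h1, h2]
    · simp at h3
    · simp at h3
      exact absurd h3.symm hk
    · have : k = 1 := by simpa using h2.symm
      subst this
      simp at h1
      rw [h1]
  have him : SP F e \ linf K = Set.range g := by
    ext P
    rw [h.mem_aff]
    constructor
    · rintro ⟨x, y, z, hn, rfl⟩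
      by_cases hz : z = 0
      · have hy : y ≠ 0 := by tauto
        refine ⟨Sum.inr (x / y), ?_⟩
        simp only [g, Sum.elim_inr, fp]
        have hyK : algebraMap F K y ≠ 0 := by simpa using hy
        rw [pt_cb_eq h.ind (by simp) (nzK (Or.inr hn))]
        refine ⟨(algebraMap F K y)⁻¹, by simpa using hy, ?_, ?_, ?_⟩
        · simp [div_eq_mul_inv, mul_comm]
        · simp [hy]
        · simp [hz]
      · refine ⟨Sum.inl (x / z, y / z), ?_⟩
        simp only [g, Sum.elim_inl, fp]
        have hyK : algebraMap F K z ≠ 0 := by simpa using hz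
        rw [pt_cb_eq h.ind (by simp) (nzK (Or.inr hn))]
        refine ⟨(algebraMap F K z)⁻¹, by simpa using hz, ?_, ?_, ?_⟩
        · simp [div_eq_mul_inv, mul_comm]
        · simp [div_eq_mul_inv, mul_comm]
        · simp [hz]
    · rintro ⟨⟨x, y⟩ | x, rfl⟩
      · exact ⟨x, y, 1, by simp, rfl⟩
      · exact ⟨x, 1, 0, by simp, rfl⟩
  rw [him, ← Set.image_univ, Set.ncard_image_of_injective _ hg, Set.ncard_univ,
    Nat.card_eq_fintype_card, Fintype.card_sum, Fintype.card_prod, sq]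

lemma main_bij [Fintype F] {e : Fin 3 → Fin 3 → K} (h : TF F e) :
    Set.BijOn (pencilTrace (Fintype.card F) (SP F e)) (SP F e \ linf K)
      {b : Set (PGPoint K) | IsSubline F (Fintype.card F) b ∧ b ⊆ linf K ∧
        pt (cb e 1 0 0) ∈ b ∧ b ⊆ splash (SP F e)} := by
  refine ⟨?_, ?_, ?_⟩
  · intro P hP
    obtain ⟨x, y, z, hn, rfl⟩ := h.mem_aff.1 hP
    refine ⟨?_, fun X hX => hX.1, ?_, trace_sub_splash hP.1⟩
    · obtain ⟨m, n, rfl⟩ := exists_mn (x := x) hn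
      rw [trace_aff h hn]
      exact affSub_isSubline h (h.s_ne hn)
    · rw [trace_eq h hn]
      exact Or.inl rfl
  · intro P hP P' hP' heq
    obtain ⟨x, y, z, hn, rfl⟩ := h.mem_aff.1 hP
    obtain ⟨x', y', z', hn', rfl⟩ := h.mem_aff.1 hP'
    obtain ⟨m, n, rfl⟩ := exists_mn (x := x) hn
    rw [trace_eq h hn, trace_eq h hn'] at heq
    have key : ∀ m1 n1 : F, m1 * z - n1 * y = m * z - n * y → m1 * z' - n1 * y' = x' := by
      intro m1 n1 h1
      have hm : psi e (algebraMap F K m1 * e 1 2 + algebraMap F K n1 * e 2 2) ∈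
          insert (pt (cb e 1 0 0)) {X | ∃ m2 n2 : F, m2 * z - n2 * y = m * z - n * y ∧
          X = psi e (algebraMap F K m2 * e 1 2 + algebraMap F K n2 * e 2 2)} :=
        Or.inr ⟨m1, n1, h1, rfl⟩
      rw [heq] at hm
      rcases hm with hm | ⟨m2, n2, h2, hm⟩
      · exact absurd hm (h.psi_ne _)
      · obtain ⟨rfl, rfl⟩ := h.inj (h.psi_inj hm)
        exact h2
    have k1 := key m n rfl
    have k2 := key (m + y) (n + z) (by ring)
    have k3 : y * z' = z * y' := by linear_combination k2 - k1
    rw [fp, fp, pt_cb_eq h.ind (nzK (Or.inr hn)) (nzK (Or.inr hn'))]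
    have : ∃ k : F, k ≠ 0 ∧ y = k * y' ∧ z = k * z' := by
      by_cases hy' : y' = 0
      · have hz' : z' ≠ 0 := by tauto
        have hy : y = 0 := by
          rw [hy', mul_zero] at k3
          rcases mul_eq_zero.1 k3 with h1 | h1
          · exact h1
          · exact absurd h1 hz'
        have hz : z ≠ 0 := by tauto
        exact ⟨z / z', div_ne_zero hz hz', by simp [hy, hy'], by field_simp⟩
      · have hy : y ≠ 0 := by
          rintro rfl
          have : z = 0 := by
            rw [zero_mul] at k3
            rcases mul_eq_zero.1 k3.symm with h1 | h1
            · exact h1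
            · exact absurd h1 hy'
          tauto
        exact ⟨y / y', div_ne_zero hy hy', by field_simp,
          by field_simp; linear_combination -k3⟩
    obtain ⟨k, hk, rfl, rfl⟩ := this
    refine ⟨algebraMap F K k, by simpa using hk, ?_, by simp, by simp⟩
    rw [← map_mul, ← k1]
    congr 1
    ring
  · rintro b ⟨hb, hbl, hT, hsub⟩
    obtain ⟨s, c, hc, rfl⟩ := subline_aff h hb hbl hT
    rw [splash_eq h] at hsub
    have key : ∀ t : F, ∃ m n : F, s + algebraMap F K t * c =
        algebraMap F K m * e 1 2 + algebraMap F K n * e 2 2 := by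
      intro t
      rcases hsub (Or.inr ⟨t, rfl⟩) with hm | ⟨m, n, hm⟩
      · exact absurd hm (h.psi_ne _)
      · exact ⟨m, n, h.psi_inj hm⟩
    obtain ⟨m, n, h0⟩ := key 0
    obtain ⟨m1, n1, h1⟩ := key 1
    have hs : s = algebraMap F K m * e 1 2 + algebraMap F K n * e 2 2 := by
      simpa using h0
    have hcv : c = algebraMap F K (m1 - m) * e 1 2 + algebraMap F K (n1 - n) * e 2 2 := by
      simp only [map_sub, map_one] at h1 ⊢
      linear_combination h1 - hs
    have hn : m1 - m ≠ 0 ∨ n1 - n ≠ 0 := by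
      by_contra! hcon
      apply hc
      rw [hcv, hcon.1, hcon.2]
      simp
    refine ⟨fp F e (m * (n1 - n) - n * (m1 - m)) (m1 - m) (n1 - n), h.mem_aff.2 ⟨_, _, _, hn, rfl⟩, ?_⟩
    rw [trace_aff h hn, ← hs, ← hcv]

end Helpers

/-- `P ↦ t_P` is a bijection from the `q²+q` affine points of a tangent
order-`q`-subplane `π` onto the order-`q`-sublines of `ℓ∞` through `T` contained in the
tangent splash of `π`; in particular there are exactly `q²+q` such sublines. -/
theorem statement1 (q : ℕ) (F K : Type) [Field F] [Field K] [Fintype F] [Fintype K]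
    [Algebra F K] (hF : Fintype.card F = q) (hK : Fintype.card K = q ^ 3)
    (π : Set (PGPoint K)) (T : PGPoint K)
    (hπ : IsSubplane F π) (htan : π ∩ linf K = {T}) :
    Set.BijOn (pencilTrace q π) (π \ linf K)
      {b : Set (PGPoint K) | IsSubline F q b ∧ b ⊆ linf K ∧ T ∈ b ∧ b ⊆ splash π} ∧
    (π \ linf K).ncard = q ^ 2 + q ∧
    {b : Set (PGPoint K) | IsSubline F q b ∧ b ⊆ linf K ∧ T ∈ b ∧
      b ⊆ splash π}.ncard = q ^ 2 + q := by
  subst hF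
  obtain ⟨e, h, rfl, rfl⟩ := exists_TF hπ htan
  have hb := main_bij h
  refine ⟨hb, aff_ncard h, ?_⟩
  rw [← hb.image_eq, Set.ncard_image_of_injOn hb.injOn, aff_ncard h]

end TangentSplashPaper
end

section
/- Let q be a prime power. The subgroup of PGL(3,q³) consisting of the homographies of PG(2,q³) that stabilize the line ℓ∞ (as a set of points) acts transitively on the set of all order-q-subplanes of PG(2,q³) that meet ℓ∞ in exactly one point. -/
namespace TangentSplashPaper

open Projectivization

lemma hmap_mk {K : Type*} [Field K] (f : (Fin 3 → K) ≃ₗ[K] (Fin 3 → K))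
    (v : Fin 3 → K) (hv : v ≠ 0) :
    hmap f (Projectivization.mk K v hv) =
      Projectivization.mk K (f v) (by simpa using hv) := by
  unfold hmap
  rw [Projectivization.map_mk]
  rfl

lemma hmap_trans {K : Type*} [Field K] (f g : (Fin 3 → K) ≃ₗ[K] (Fin 3 → K))
    (P : PGPoint K) : hmap (f.trans g) P = hmap g (hmap f P) := by
  induction P using Projectivization.ind with
  | h v hv => simp [hmap_mk]

lemma hmap_symm {K : Type*} [Field K] (f : (Fin 3 → K) ≃ₗ[K] (Fin 3 → K))
    (P : PGPoint K) : hmap f.symm (hmap f P) = P := by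
  induction P using Projectivization.ind with
  | h v hv => simp [hmap_mk]

lemma hmap_symm' {K : Type*} [Field K] (f : (Fin 3 → K) ≃ₗ[K] (Fin 3 → K))
    (P : PGPoint K) : hmap f (hmap f.symm P) = P := by
  induction P using Projectivization.ind with
  | h v hv => simp [hmap_mk]

/-- The linear functional `v ↦ (f v)₂` restricted to `F³`. -/
noncomputable def phi {F K : Type*} [Field F] [Field K] [Algebra F K]
    (f : (Fin 3 → K) ≃ₗ[K] (Fin 3 → K)) : (Fin 3 → F) →ₗ[F] K where
  toFun v := f (fun i => algebraMap F K (v i)) 2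
  map_add' u v := by
    have : (fun i => algebraMap F K ((u + v) i)) =
      (fun i => algebraMap F K (u i)) + (fun i => algebraMap F K (v i)) := by
      ext i; simp
    rw [this, map_add]; rfl
  map_smul' c v := by
    have : (fun i => algebraMap F K ((c • v) i)) =
      algebraMap F K c • (fun i => algebraMap F K (v i)) := by
      ext i; simp
    rw [this, map_smul]; simp [Algebra.smul_def]

lemma lift_ne {F K : Type*} [Field F] [Field K] [Algebra F K] {v : Fin 3 → F} (hv : v ≠ 0) :
    (fun i => algebraMap F K (v i)) ≠ 0 := by
  intro h
  apply hv
  ext i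
  have := congrFun h i
  simpa using this

lemma ker_phi {F K : Type*} [Field F] [Field K] [Algebra F K]
    (f : (Fin 3 → K) ≃ₗ[K] (Fin 3 → K)) (T : PGPoint K)
    (hT : (hmap f '' basePlane F K) ∩ linf K = {T}) :
    Module.finrank F (LinearMap.ker (phi (F := F) f)) = 1 := by
  have hmem : T ∈ (hmap f '' basePlane F K) ∩ linf K := by rw [hT]; rfl
  obtain ⟨⟨P, ⟨v, hv, rfl, hvF⟩, hP⟩, hl⟩ := hmem
  choose x hx using hvF
  have hvx : v = fun i => algebraMap F K (x i) := by ext i; exact (hx i).symm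
  subst hvx
  have hx0 : x ≠ 0 := by
    rintro rfl
    apply hv; ext i; simp
  rw [← hP, hmap_mk, mk_mem_linf] at hl
  have hxk : x ∈ LinearMap.ker (phi (F := F) f) := hl
  refine (finrank_eq_one_iff_of_nonzero' (⟨x, hxk⟩ : LinearMap.ker (phi (F := F) f))
    (by simpa using hx0)).2 ?_
  rintro ⟨w, hw⟩
  by_cases hw0 : w = 0
  · exact ⟨0, by ext; simp [hw0]⟩
  have hw' : f (fun i => algebraMap F K (w i)) 2 = 0 := hw
  have h1 : hmap f (Projectivization.mk K _ (lift_ne (K := K) hw0)) ∈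
      (hmap f '' basePlane F K) ∩ linf K := by
    refine ⟨⟨_, ⟨_, lift_ne hw0, rfl, fun i => ⟨w i, rfl⟩⟩, rfl⟩, ?_⟩
    rw [hmap_mk, mk_mem_linf]; exact hw'
  rw [hT, Set.mem_singleton_iff, ← hP] at h1
  have h2 := congrArg (hmap f.symm) h1
  rw [hmap_symm, hmap_symm, Projectivization.mk_eq_mk_iff'] at h2
  obtain ⟨a, ha⟩ := h2
  obtain ⟨i, hi⟩ := Function.ne_iff.1 hx0
  have hi' : algebraMap F K (x i) ≠ 0 := by simpa using hi
  have hai : a = algebraMap F K (w i / x i) := by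
    have := congrFun ha i
    simp only [Pi.smul_apply, smul_eq_mul] at this
    rw [map_div₀, eq_div_iff hi', this]
  refine ⟨w i / x i, ?_⟩
  ext j
  apply (algebraMap F K).injective
  have := congrFun ha j
  simp only [Pi.smul_apply, smul_eq_mul] at this
  simp only [SetLike.mk_smul_mk, Pi.smul_apply, smul_eq_mul]
  rw [map_mul, ← hai, this]

lemma exists_lam {F K : Type*} [Field F] [Field K] [Algebra F K] [FiniteDimensional F K]
    (h3 : Module.finrank F K = 3) (τ : K) (hτ : τ ≠ 0) (U : Submodule F K)
    (hU : Module.finrank F U = 2) : ∃ l : K, l ≠ 0 ∧ l ∈ U ∧ l * τ ∈ U := by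
  let m : K ≃ₗ[F] K := LinearEquiv.ofInjectiveEndo (LinearMap.mulRight F τ)
    (fun a b h => mul_right_cancel₀ hτ (by simpa using h))
  have hm : ∀ a, m a = a * τ := fun a => rfl
  have hV : Module.finrank F (U.map (m : K →ₗ[F] K)) = 2 := by
    rw [← hU]; exact LinearEquiv.finrank_map_eq m U
  have := Submodule.finrank_sup_add_finrank_inf_eq U (U.map (m : K →ₗ[F] K))
  have h4 := Submodule.finrank_le (U ⊔ (U.map (m : K →ₗ[F] K)))
  have h5 : U ⊓ U.map (m : K →ₗ[F] K) ≠ ⊥ := by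
    intro h
    rw [h, finrank_bot] at this
    omega
  obtain ⟨z, hz, hz0⟩ := Submodule.exists_mem_ne_zero_of_ne_bot h5
  obtain ⟨hz1, l, hl, rfl⟩ := hz
  refine ⟨l, ?_, hl, hz1⟩
  rintro rfl
  simp at hz0

lemma base_image {F K : Type*} [Field F] [Field K] [Algebra F K]
    (g : (Fin 3 → K) ≃ₗ[K] (Fin 3 → K)) (G : Matrix (Fin 3) (Fin 3) F)
    (hg : ∀ v, g v = (G.map (algebraMap F K)).mulVec v) :
    ∀ P ∈ basePlane F K, hmap g P ∈ basePlane F K := by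
  rintro P ⟨v, hv, rfl, hvF⟩
  refine ⟨g v, by simpa using hv, hmap_mk _ _ _, fun i => ?_⟩
  rw [hg]
  simp only [Matrix.mulVec, dotProduct]
  exact Subring.sum_mem _ fun j _ => Subring.mul_mem _ ⟨_, rfl⟩ (hvF j)

lemma normal_form {F K : Type*} [Field F] [Field K] [Algebra F K] [FiniteDimensional F K]
    (h3 : Module.finrank F K = 3) (τ : K) (hτ : τ ∉ (algebraMap F K).range)
    (S : Set (PGPoint K)) (hS : IsSubplane F S) (ht : ∃ T : PGPoint K, S ∩ linf K = {T}) :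
    ∃ f : (Fin 3 → K) ≃ₗ[K] (Fin 3 → K), S = hmap f '' basePlane F K ∧
      ∃ l : K, l ≠ 0 ∧ ∀ v, f v 2 = l * (v 1 + τ * v 2) := by
  obtain ⟨f, rfl⟩ := hS
  obtain ⟨T, hT⟩ := ht
  have hker := ker_phi f T hT
  have hτ0 : τ ≠ 0 := by rintro rfl; exact hτ (Subring.zero_mem _)
  have hrn := LinearMap.finrank_range_add_finrank_ker (phi (F := F) f)
  rw [hker, Module.finrank_fin_fun] at hrn
  obtain ⟨l, hl0, ⟨y, hy⟩, ⟨z, hz⟩⟩ := exists_lam h3 τ hτ0 (LinearMap.range (phi (F := F) f))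
    (by omega)
  have hkb : LinearMap.ker (phi (F := F) f) ≠ ⊥ := by
    intro h; rw [h, finrank_bot] at hker; omega
  obtain ⟨x, hx, hx0⟩ := Submodule.exists_mem_ne_zero_of_ne_bot hkb
  rw [LinearMap.mem_ker] at hx
  let G : Matrix (Fin 3) (Fin 3) F := Matrix.of fun i j => ![x, y, z] j i
  have hG : IsUnit G := by
    rw [← Matrix.mulVec_injective_iff_isUnit, ← Matrix.coe_mulVecLin, ← LinearMap.ker_eq_bot,
      LinearMap.ker_eq_bot']
    intro c hc
    have hc' : c 0 • x + c 1 • y + c 2 • z = 0 := by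
      ext i
      have := congrFun hc i
      simp [Matrix.mulVec, dotProduct, Fin.sum_univ_three, G] at this
      simp only [Pi.add_apply, Pi.smul_apply, smul_eq_mul, Pi.zero_apply]
      linear_combination this
    have h1 := congrArg (phi (F := F) f) hc'
    rw [map_add, map_add, map_smul, map_smul, map_smul, hx, hy, hz, map_zero] at h1
    simp only [Algebra.smul_def, mul_zero, zero_add] at h1
    have h2 : algebraMap F K (c 1) + algebraMap F K (c 2) * τ = 0 := by
      apply mul_left_cancel₀ hl0
      linear_combination h1
    have hc2 : c 2 = 0 := by
      by_contra h
      apply hτ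
      have h' : algebraMap F K (c 2) ≠ 0 := by simpa using h
      refine ⟨-(c 1) / c 2, ?_⟩
      rw [map_div₀, map_neg, div_eq_iff h']
      linear_combination -h2
    have hc1 : c 1 = 0 := by simpa [hc2] using h2
    have hc0 : c 0 = 0 := by simpa [hc1, hc2, hx0] using hc'
    ext i; fin_cases i <;> simp [hc0, hc1, hc2]
  have hdet : IsUnit G.det := (Matrix.isUnit_iff_isUnit_det _).1 hG
  have e1 : G.map (algebraMap F K) * G⁻¹.map (algebraMap F K) = 1 := by
    rw [← Matrix.map_mul, Matrix.mul_nonsing_inv _ hdet]; simp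
  have e2 : G⁻¹.map (algebraMap F K) * G.map (algebraMap F K) = 1 := by
    rw [← Matrix.map_mul, Matrix.nonsing_inv_mul _ hdet]; simp
  let g : (Fin 3 → K) ≃ₗ[K] (Fin 3 → K) := Matrix.toLin'OfInv e2 e1
  have hg : ∀ v, g v = (G.map (algebraMap F K)).mulVec v := fun v => rfl
  have hgs : ∀ v, g.symm v = (G⁻¹.map (algebraMap F K)).mulVec v := fun v => rfl
  refine ⟨g.trans f, ?_, l, hl0, fun v => ?_⟩
  · ext P
    constructor
    · rintro ⟨Q, hQ, rfl⟩
      refine ⟨hmap g.symm Q, base_image _ _ hgs _ hQ, ?_⟩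
      rw [hmap_trans, hmap_symm']
    · rintro ⟨Q, hQ, rfl⟩
      exact ⟨hmap g Q, base_image _ _ hg _ hQ, (hmap_trans _ _ _).symm⟩
  · have hgv : g v = v 0 • (fun i => algebraMap F K (x i)) + v 1 • (fun i => algebraMap F K (y i))
        + v 2 • (fun i => algebraMap F K (z i)) := by
      ext i
      rw [hg]
      simp [Matrix.mulVec, dotProduct, Fin.sum_univ_three, G]
      ring
    have hx' : f (fun i => algebraMap F K (x i)) 2 = 0 := hx
    have hy' : f (fun i => algebraMap F K (y i)) 2 = l := hy
    have hz' : f (fun i => algebraMap F K (z i)) 2 = l * τ := hz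
    rw [LinearEquiv.trans_apply, hgv, map_add, map_add, map_smul, map_smul, map_smul]
    simp only [Pi.add_apply, Pi.smul_apply, hx', hy', hz', smul_eq_mul]
    ring

/-- the subgroup of `PGL(3,q³)` stabilising `ℓ∞` is transitive on the
order-`q`-subplanes meeting `ℓ∞` in exactly one point. -/
theorem statement4 (q : ℕ) (F K : Type) [Field F] [Field K] [Fintype F] [Fintype K]
    [Algebra F K] (hF : Fintype.card F = q) (hK : Fintype.card K = q ^ 3)
    (π₁ π₂ : Set (PGPoint K))
    (h₁ : IsSubplane F π₁) (h₂ : IsSubplane F π₂)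
    (ht₁ : ∃ T : PGPoint K, π₁ ∩ linf K = {T})
    (ht₂ : ∃ T : PGPoint K, π₂ ∩ linf K = {T}) :
    ∃ f : (Fin 3 → K) ≃ₗ[K] (Fin 3 → K),
      hmap f '' linf K = linf K ∧ hmap f '' π₁ = π₂ := by
  have hq : 1 < q := hF ▸ Fintype.one_lt_card
  have h3 : Module.finrank F K = 3 := by
    have h := Module.card_eq_pow_finrank (K := F) (V := K)
    rw [hK, hF] at h
    exact (Nat.pow_right_injective hq h).symm
  obtain ⟨τ, hτ⟩ : ∃ τ : K, τ ∉ (algebraMap F K).range := by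
    by_contra! h
    have := Fintype.card_le_of_surjective (algebraMap F K) h
    rw [hK, hF] at this
    have h2 : q ^ 1 < q ^ 3 := Nat.pow_lt_pow_right hq (by norm_num)
    rw [pow_one] at h2
    omega
  obtain ⟨f₁, rfl, l₁, hl₁, hf₁⟩ := normal_form h3 τ hτ π₁ h₁ ht₁
  obtain ⟨f₂, rfl, l₂, hl₂, hf₂⟩ := normal_form h3 τ hτ π₂ h₂ ht₂
  have key : ∀ w, f₁ w 2 = 0 ↔ f₂ w 2 = 0 := fun w => by
    rw [hf₁, hf₂]; simp [hl₁, hl₂]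
  refine ⟨f₁.symm.trans f₂, ?_, ?_⟩
  · ext P
    constructor
    · rintro ⟨Q, hQ, rfl⟩
      induction Q using Projectivization.ind with
      | h v hv =>
        rw [mk_mem_linf] at hQ
        rw [hmap_mk, mk_mem_linf, LinearEquiv.trans_apply, ← key]
        simpa using hQ
    · intro hP
      refine ⟨hmap (f₁.symm.trans f₂).symm P, ?_, hmap_symm' _ _⟩
      induction P using Projectivization.ind with
      | h v hv =>
        rw [mk_mem_linf] at hP
        rw [hmap_mk, mk_mem_linf]
        have : (f₁.symm.trans f₂).symm v = f₁ (f₂.symm v) := rfl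
        rw [this, key]
        simpa using hP
  · rw [Set.image_image]
    apply Set.image_congr
    intro P _
    rw [hmap_trans, hmap_symm]

end TangentSplashPaper
end
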